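/- Let Φ be a generic alternating 2n×2n matrix and v a generic column vector of size 2n, over the polynomial ring A = ℤ[x_{ij}, y_i]. The Huneke–Ulrich ideal J generated by Pf(Φ) together with the 2n entries of Φv has grade 2n-1, is minimally generated by 2n+1 elements, and A/J is Gorenstein. -/

import Mathlib

open Finset in
/-- The set of permutations of `Fin (2*n)` giving normalized perfect matchings. -/
noncomputable def pfPerms (n : ℕ) : Finset (Equiv.Perm (Fin (2*n))) :=
  Finset.univ.filter (fun σ =>
    (∀ i : Fin n, σ ⟨2*i, by omega⟩ < σ ⟨2*i+1, by omega⟩) ∧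
    (∀ i j : Fin n, i < j → σ ⟨2*(i:ℕ), by omega⟩ < σ ⟨2*(j:ℕ), by omega⟩))

/-- The Pfaffian of a `2n × 2n` matrix, as the signed sum over perfect matchings. -/
noncomputable def pfaffian {R : Type*} [CommRing R] {n : ℕ}
    (A : Matrix (Fin (2*n)) (Fin (2*n)) R) : R :=
  ∑ σ ∈ pfPerms n, (Equiv.Perm.sign σ : ℤ) •
    ∏ i : Fin n, A (σ ⟨2*i, by omega⟩) (σ ⟨2*i+1, by omega⟩)

variable {R : Type*} [CommRing R]

open RingTheory.Sequence in
/-- The ideal `I` has grade `g`: `I` contains a regular sequence of length `g`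
but none of length `g+1`. -/
def gradeIs (R : Type*) [CommRing R] (I : Ideal R) (g : ℕ) : Prop :=
  (∃ rs : List R, rs.length = g ∧ (∀ x ∈ rs, x ∈ I) ∧ IsRegular R rs) ∧
  ¬ ∃ rs : List R, rs.length = g + 1 ∧ (∀ x ∈ rs, x ∈ I) ∧ IsRegular R rs

open RingTheory.Sequence IsLocalRing in
/-- A local ring is Cohen–Macaulay if its depth (the length of a maximal regular
sequence in the maximal ideal) equals its Krull dimension. -/
def IsCMLocalRing (R : Type*) [CommRing R] [IsLocalRing R] : Prop :=
  ∃ d : ℕ, (∃ rs : List R, rs.length = d ∧ (∀ x ∈ rs, x ∈ maximalIdeal R) ∧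
    IsRegular R rs) ∧ ringKrullDim R = d

open RingTheory.Sequence IsLocalRing in
/-- A finitely generated module `M` over a Noetherian local ring is Cohen–Macaulay if
its depth equals its Krull dimension `dim (R / ann M)`. -/
def IsCMModule (R : Type*) [CommRing R] [IsLocalRing R] (M : Type*) [AddCommGroup M]
    [Module R M] : Prop :=
  ∃ d : ℕ, (∃ rs : List R, rs.length = d ∧ (∀ x ∈ rs, x ∈ maximalIdeal R) ∧
    IsRegular M rs) ∧ ringKrullDim (R ⧸ Module.annihilator R M) = d

open CategoryTheory in
/-- The Ext module `Ext^i_R(M, N)`, as an object of `ModuleCat R`. -/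
noncomputable def ExtMod (R : Type) [CommRing R]
    (M N : Type) [AddCommGroup M] [Module R M] [AddCommGroup N] [Module R N]
    (i : ℕ) : ModuleCat R :=
  ((Ext R (ModuleCat R) i).obj (Opposite.op (ModuleCat.of R M))).obj (ModuleCat.of R N)

open IsLocalRing in
/-- A Noetherian local ring `R` with residue field `k` is Gorenstein if
`Ext^i(k, R) = 0` for `i ≠ d` and `Ext^d(k, R) ≅ k`, for some `d`. -/
def IsGorensteinLocalRing (R : Type) [CommRing R] [IsLocalRing R] : Prop :=
  ∃ d : ℕ,
    (∀ i : ℕ, i ≠ d → Subsingleton (ExtMod R (ResidueField R) R i)) ∧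
    Nonempty (ExtMod R (ResidueField R) R d ≃ₗ[R] ResidueField R)

/-- The polynomial ring `ℤ[x_{ij}, y_i]` for the Huneke–Ulrich ideal: variables
`x_{ij}` for the generic alternating `2n × 2n` matrix and `y_i` for the generic
vector. -/
abbrev HURing (n : ℕ) : Type :=
  MvPolynomial ({p : Fin (2*n) × Fin (2*n) // p.1 < p.2} ⊕ Fin (2*n)) ℤ

/-- The generic alternating `2n × 2n` matrix `Φ`. -/
noncomputable def huPhi (n : ℕ) : Matrix (Fin (2*n)) (Fin (2*n)) (HURing n) :=
  Matrix.of fun i j =>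
    if h : i < j then MvPolynomial.X (Sum.inl ⟨(i, j), h⟩)
    else if h' : j < i then - MvPolynomial.X (Sum.inl ⟨(j, i), h'⟩) else 0

/-- The generic vector `v`. -/
noncomputable def huV (n : ℕ) : Fin (2*n) → HURing n :=
  fun i => MvPolynomial.X (Sum.inr i)

/-- The `2n+1` generators of the Huneke–Ulrich ideal: the entries of `Φv` followed
by `Pf(Φ)`. -/
noncomputable def huGens (n : ℕ) : Fin (2*n+1) → HURing n :=
  Fin.snoc ((huPhi n).mulVec (huV n)) (pfaffian (huPhi n))

/-- The Huneke–Ulrich deviation-2 ideal `J = (Pf(Φ)) + (entries of Φv)`. -/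
noncomputable def huIdeal (n : ℕ) : Ideal (HURing n) :=
  Ideal.span (Set.range (huGens n))

section PfaffianOfList

variable {ι S : Type*} [CommRing S]

/-- Alternating expansion of a function on lists by deleting one entry, weighted by `w`. -/
def expand (w : ι → S) : (List ι → S) → List ι → S
  | _, [] => 0
  | f, b :: l => w b * f l - expand w (fun l' => f (b :: l')) l

/-- Pfaffian of the alternating form `x` along a list, with bounded recursion depth. -/
def pfAux (x : ι → ι → S) : ℕ → List ι → S
  | _, [] => 1
  | 0, _ :: _ => 0
  | N + 1, a :: l => expand (x a) (pfAux x N) l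

/-- Pfaffian of the alternating form `x` along a list of indices. -/
def pfList (x : ι → ι → S) (l : List ι) : S := pfAux x l.length l

@[simp] lemma expand_nil (w : ι → S) (f : List ι → S) : expand w f [] = 0 := by
  unfold expand; rfl

lemma expand_cons (w : ι → S) (f : List ι → S) (b : ι) (l : List ι) :
    expand w f (b :: l) = w b * f l - expand w (fun l' => f (b :: l')) l := by
  rw [expand]

lemma expand_congr (w : ι → S) {f g : List ι → S} (l : List ι)
    (h : ∀ l' : List ι, l'.length + 1 = l.length → f l' = g l') :
    expand w f l = expand w g l := by
  induction l generalizing f g with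
  | nil => simp
  | cons b l ih =>
    rw [expand_cons, expand_cons, h l (by simp)]
    congr 1
    exact ih fun l' hl' => h _ (by simpa using hl')

lemma expand_sub (w : ι → S) (f g : List ι → S) (l : List ι) :
    expand w (fun l => f l - g l) l = expand w f l - expand w g l := by
  induction l generalizing f g with
  | nil => simp
  | cons b l ih => simp only [expand_cons, ih]; ring

lemma expand_const_mul (w : ι → S) (c : S) (f : List ι → S) (l : List ι) :
    expand w (fun l => c * f l) l = c * expand w f l := by
  induction l generalizing f with
  | nil => simp
  | cons b l ih => simp only [expand_cons, ih]; ring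

lemma expand_expand (w u : ι → S) (f : List ι → S) (l : List ι) :
    expand w (expand u f) l = - expand u (expand w f) l := by
  induction l generalizing f with
  | nil => simp
  | cons b l ih =>
    simp only [expand_cons, expand_sub, expand_const_mul, ih]; ring

lemma expand_sum {κ : Type*} (s : Finset κ) (c : κ → S) (w : κ → ι → S) (f : List ι → S)
    (l : List ι) :
    expand (fun b => ∑ a ∈ s, c a * w a b) f l = ∑ a ∈ s, c a * expand (w a) f l := by
  induction l generalizing f with
  | nil => simp
  | cons b l ih =>
    simp only [expand_cons, ih, mul_sub, Finset.sum_sub_distrib, Finset.sum_mul, mul_assoc]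

lemma expand_neg (w : ι → S) (f : List ι → S) (l : List ι) :
    expand (fun b => - w b) f l = - expand w f l := by
  induction l generalizing f with
  | nil => simp
  | cons b l ih => simp only [expand_cons, ih]; ring

lemma expand_mem (w : ι → S) (f : List ι → S) (l : List ι) (I : Ideal S)
    (h : ∀ b ∈ l, w b ∈ I) : expand w f l ∈ I := by
  induction l generalizing f with
  | nil => simp
  | cons b l ih =>
    rw [expand_cons]
    exact I.sub_mem (I.mul_mem_right _ (h b (by simp))) (ih _ fun c hc => h c (by simp [hc]))

/-- A function on lists that changes sign when two neighbouring entries are exchanged. -/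
def IsAlternatingOnLists (f : List ι → S) : Prop :=
  ∀ l₁ a b l₂, f (l₁ ++ a :: b :: l₂) = - f (l₁ ++ b :: a :: l₂)

lemma IsAlternatingOnLists.cons {f : List ι → S} (h : IsAlternatingOnLists f) (c : ι) :
    IsAlternatingOnLists fun l => f (c :: l) :=
  fun l₁ a b l₂ => h (c :: l₁) a b l₂

lemma IsAlternatingOnLists.expand {f : List ι → S} (h : IsAlternatingOnLists f) (w : ι → S) :
    IsAlternatingOnLists (expand w f) := by
  intro l₁
  induction l₁ generalizing f with
  | nil =>
    intro a b l₂
    have : (fun l' => f (a :: b :: l')) = fun l' => (-1) * f (b :: a :: l') := by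
      ext l'; simpa using h [] a b l'
    simp only [List.nil_append, expand_cons, this, expand_const_mul]; ring
  | cons c l₁ ih =>
    intro a b l₂
    simp only [List.cons_append, expand_cons, ih (h.cons c) a b l₂, h l₁ a b l₂]; ring

lemma IsAlternatingOnLists.move {f : List ι → S} (h : IsAlternatingOnLists f)
    (l₁ : List ι) (b : ι) (l₂ : List ι) :
    f (l₁ ++ b :: l₂) = (-1) ^ l₁.length * f (b :: (l₁ ++ l₂)) := by
  induction l₁ generalizing f with
  | nil => simp
  | cons c l₁ ih =>
    have := ih (h.cons c)
    simp only [List.cons_append] at this ⊢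
    rw [this, show f (c :: b :: (l₁ ++ l₂)) = - f (b :: c :: (l₁ ++ l₂)) from h [] _ _ _]
    simp [pow_succ]

variable {x : ι → ι → S}

lemma pfAux_isAlternating (hx : ∀ a b, x a b = - x b a) (N : ℕ) :
    IsAlternatingOnLists (pfAux x N) := by
  induction N with
  | zero =>
    intro l₁ a b l₂
    cases l₁ <;> simp [pfAux]
  | succ N ih =>
    intro l₁ a b l₂
    cases l₁ with
    | cons c l₁ => simpa only [List.cons_append, pfAux] using ih.expand _ l₁ a b l₂
    | nil =>
      cases N with
      | zero =>
        have h : ∀ c : ι, expand (x c) (fun _ => (0 : S)) l₂ = 0 := fun c => by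
          simpa using expand_const_mul (x c) 0 (fun _ => 0) l₂
        simp only [List.nil_append, pfAux, expand_cons, h, hx a b]; ring
      | succ N =>
        simp only [List.nil_append, pfAux, expand_cons]
        rw [expand_expand, hx a b]; ring

lemma pfAux_eq_pfAux (N M : ℕ) (l : List ι) (hN : l.length ≤ N) (hM : l.length ≤ M) :
    pfAux x N l = pfAux x M l := by
  induction N generalizing M l with
  | zero =>
    obtain rfl := List.length_eq_zero_iff.mp (Nat.le_zero.mp hN)
    simp [pfAux]
  | succ N ih =>
    cases l with
    | nil => simp [pfAux]
    | cons a l =>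
      cases M with
      | zero => simp at hM
      | succ M =>
        simp only [List.length_cons, add_le_add_iff_right] at hN hM
        simp only [pfAux]
        exact expand_congr _ _ fun l' hl' => ih _ _ (by omega) (by omega)

@[simp] lemma pfList_nil : pfList x [] = 1 := by simp [pfList, pfAux]

lemma pfList_cons (a : ι) (l : List ι) :
    pfList x (a :: l) = expand (x a) (pfList x) l := by
  simp only [pfList, List.length_cons, pfAux]
  exact expand_congr _ _ fun l' hl' => pfAux_eq_pfAux _ _ _ (by omega) le_rfl

lemma pfList_eq_zero_of_odd (l : List ι) (h : Odd l.length) : pfList x l = 0 := by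
  induction hN : l.length using Nat.strong_induction_on generalizing l with
  | _ N ih =>
    cases l with
    | nil => simp at h
    | cons a l =>
      rw [pfList_cons, expand_congr (g := fun _ => (0 : S) * 0), expand_const_mul, zero_mul]
      intro l' hl'
      rw [ih l'.length (by simp at hN; omega) l' _ rfl, zero_mul]
      simp only [List.length_cons, ← hl'] at h
      grind

lemma pfList_isAlternating (hx : ∀ a b, x a b = - x b a) : IsAlternatingOnLists (pfList x) := by
  intro l₁ a b l₂
  have := pfAux_isAlternating hx (l₁.length + l₂.length + 2) l₁ a b l₂
  simp only [pfList]
  convert this using 2 <;> simp only [List.length_append, List.length_cons] <;> ring_nf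

lemma pfList_cons_of_mem [IsDomain S] [CharZero S] (hx : ∀ a b, x a b = - x b a)
    (a : ι) (l : List ι) (ha : a ∈ l) : pfList x (a :: l) = 0 := by
  obtain ⟨l₁, l₂, rfl⟩ := List.append_of_mem ha
  have h := pfList_isAlternating hx
  have h1 := (h.cons a).move l₁ a l₂
  have h2 : pfList x (a :: a :: (l₁ ++ l₂)) = 0 :=
    self_eq_neg.mp (h [] a a (l₁ ++ l₂))
  rw [h1, h2, mul_zero]

/-- The expansion of `∑ y_a Pf(a :: l)` in terms of the entries `∑ y_a x_{ba}` of `Φ v`. -/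
lemma sum_mul_pfList_cons (hx : ∀ a b, x a b = - x b a) (s : Finset ι) (y : ι → S)
    (l : List ι) :
    ∑ a ∈ s, y a * pfList x (a :: l) =
      - expand (fun b => ∑ a ∈ s, x b a * y a) (pfList x) l := by
  rw [← expand_neg]
  simp only [pfList_cons, ← expand_sum]
  congr 1
  ext b
  rw [← Finset.sum_neg_distrib]
  exact Finset.sum_congr rfl fun a _ => by rw [hx a b]; ring

lemma expand_ofFn {n : ℕ} (w : ι → S) (f : List ι → S) (v : Fin (n + 1) → ι) :
    expand w f (List.ofFn v) =
      ∑ k : Fin (n + 1), (-1) ^ (k : ℕ) * w (v k) * f (List.ofFn (v ∘ k.succAbove)) := by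
  induction n generalizing f with
  | zero => simp [expand_cons]
  | succ n ih =>
    rw [List.ofFn_succ, expand_cons, ih, sub_eq_add_neg, ← Finset.sum_neg_distrib]
    conv_rhs => rw [Fin.sum_univ_succ]
    congr 1
    · simp [Function.comp_def]
    · refine Finset.sum_congr rfl fun k _ => ?_
      simp [List.ofFn_succ, pow_succ, Function.comp_def]

lemma pfPerms_apply_zero {n : ℕ} {σ : Equiv.Perm (Fin (2 * (n + 1)))}
    (hσ : σ ∈ pfPerms (n + 1)) : σ ⟨0, by omega⟩ = ⟨0, by omega⟩ := by
  simp only [pfPerms, Finset.mem_filter, Finset.mem_univ, true_and] at hσ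
  obtain ⟨p, hp⟩ := σ.surjective ⟨0, by omega⟩
  obtain ⟨i, hi | hi⟩ : ∃ i : ℕ, (p : ℕ) = 2 * i ∨ (p : ℕ) = 2 * i + 1 := ⟨p / 2, by omega⟩
  · rcases Nat.eq_zero_or_pos i with rfl | h0
    · rwa [show p = ⟨0, by omega⟩ from Fin.ext hi] at hp
    · have := hσ.2 ⟨0, by omega⟩ ⟨i, by omega⟩ h0
      rw [show (⟨2 * ((⟨i, by omega⟩ : Fin (n + 1)) : ℕ), by omega⟩ : Fin (2 * (n + 1))) = p from
        Fin.ext hi.symm, hp] at this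
      exact absurd this (by simp)
  · have := hσ.1 ⟨i, by omega⟩
    rw [show (⟨2 * ((⟨i, by omega⟩ : Fin (n + 1)) : ℕ) + 1, by omega⟩ : Fin (2 * (n + 1))) = p from
      Fin.ext hi.symm, hp] at this
    exact absurd this (by simp)

/-- The permutation of `Fin (2 * (n + 1))` fixing `0`, sending `1` to `k + 1` and given by `ρ`
on the remaining entries. -/
def extendPerm {n : ℕ} (k : Fin (2 * n + 1)) (ρ : Equiv.Perm (Fin (2 * n))) :
    Equiv.Perm (Fin (2 * (n + 1))) :=
  Equiv.Perm.decomposeFin.symm (0, k.cycleRange⁻¹ * Equiv.Perm.decomposeFin.symm (0, ρ))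

lemma extendPerm_zero {n : ℕ} (k : Fin (2 * n + 1)) (ρ : Equiv.Perm (Fin (2 * n))) :
    extendPerm k ρ (0 : Fin (2 * n + 1 + 1)) = (0 : Fin (2 * n + 1 + 1)) := by
  simp only [extendPerm]
  exact Equiv.Perm.decomposeFin_symm_apply_zero (n := 2 * n + 1) 0 _

lemma extendPerm_succ {n : ℕ} (k : Fin (2 * n + 1)) (ρ : Equiv.Perm (Fin (2 * n)))
    (i : Fin (2 * n + 1)) :
    extendPerm k ρ i.succ =
      ((k.cycleRange⁻¹ * Equiv.Perm.decomposeFin.symm (0, ρ) : Equiv.Perm _) i).succ := by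
  have := Equiv.Perm.decomposeFin_symm_apply_succ (n := 2 * n + 1)
    (k.cycleRange⁻¹ * Equiv.Perm.decomposeFin.symm (0, ρ)) 0 i
  exact this

lemma extendPerm_one {n : ℕ} (k : Fin (2 * n + 1)) (ρ : Equiv.Perm (Fin (2 * n))) :
    extendPerm k ρ (Fin.succ 0) = k.succ := by
  rw [extendPerm_succ]
  simp [Equiv.Perm.inv_def]

lemma extendPerm_succ_succ {n : ℕ} (k : Fin (2 * n + 1)) (ρ : Equiv.Perm (Fin (2 * n)))
    (i : Fin (2 * n)) :
    extendPerm k ρ i.succ.succ = (k.succAbove (ρ i)).succ := by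
  rw [extendPerm_succ]
  simp [Equiv.Perm.inv_def]

lemma sign_extendPerm {n : ℕ} (k : Fin (2 * n + 1)) (ρ : Equiv.Perm (Fin (2 * n))) :
    Equiv.Perm.sign (extendPerm k ρ) = (-1) ^ (k : ℕ) * Equiv.Perm.sign ρ := by
  rw [extendPerm]
  refine (Equiv.Perm.decomposeFin.symm_sign (n := 2 * n + 1) 0 _).trans ?_
  simp [Fin.sign_cycleRange]

lemma extendPerm_injective {n : ℕ} :
    Function.Injective fun p : Fin (2 * n + 1) × Equiv.Perm (Fin (2 * n)) =>
      extendPerm p.1 p.2 := by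
  rintro ⟨k, ρ⟩ ⟨k', ρ'⟩ h
  have hk : k = k' := by
    have := congrArg (fun σ : Equiv.Perm (Fin (2 * (n + 1))) => σ (Fin.succ 0)) h
    simpa only [extendPerm_one, Fin.succ_inj] using this
  subst hk
  simpa [extendPerm] using h

lemma exists_extendPerm {n : ℕ} (σ : Equiv.Perm (Fin (2 * (n + 1))))
    (h : σ (0 : Fin (2 * n + 1 + 1)) = (0 : Fin (2 * n + 1 + 1))) :
    ∃ k ρ, extendPerm k ρ = σ := by
  obtain ⟨⟨p, τ⟩, rfl⟩ := (Equiv.Perm.decomposeFin (n := 2 * n + 1)).symm.surjective σ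
  obtain rfl : p = 0 := by
    rw [← h]; exact (Equiv.Perm.decomposeFin_symm_apply_zero (n := 2 * n + 1) p _).symm
  obtain ⟨⟨q, ρ⟩, h2⟩ := (Equiv.Perm.decomposeFin (n := 2 * n)).symm.surjective
    ((τ 0).cycleRange * τ)
  obtain rfl : q = 0 := by
    rw [← Equiv.Perm.decomposeFin_symm_apply_zero (n := 2 * n) q ρ, h2]
    simp
  refine ⟨τ 0, ρ, ?_⟩
  rw [extendPerm, h2, inv_mul_cancel_left]

lemma extendPerm_mem_pfPerms {n : ℕ} (k : Fin (2 * n + 1)) (ρ : Equiv.Perm (Fin (2 * n))) :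
    extendPerm k ρ ∈ pfPerms (n + 1) ↔ ρ ∈ pfPerms n := by
  have h0 : extendPerm k ρ ⟨0, by omega⟩ = ⟨0, by omega⟩ := extendPerm_zero k ρ
  have h1 : extendPerm k ρ ⟨1, by omega⟩ = k.succ := extendPerm_one k ρ
  have h2 : ∀ (j : ℕ) (hj : j < 2 * n) (j' : ℕ) (hj' : j' = j + 2),
      extendPerm k ρ ⟨j', by omega⟩ = (k.succAbove (ρ ⟨j, hj⟩)).succ := by
    rintro j hj _ rfl; exact extendPerm_succ_succ k ρ ⟨j, hj⟩
  have hlt : ∀ a b : Fin (2 * n), (k.succAbove a).succ < (k.succAbove b).succ ↔ a < b := by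
    intro a b
    rw [Fin.succ_lt_succ_iff, (Fin.strictMono_succAbove k).lt_iff_lt]
  simp only [pfPerms, Finset.mem_filter, Finset.mem_univ, true_and]
  constructor
  · rintro ⟨ha, hb⟩
    constructor
    · intro i
      have := ha i.succ
      rw [h2 (2 * i) (by omega) _ (by simp; ring),
        h2 (2 * i + 1) (by omega) _ (by simp; ring)] at this
      exact (hlt _ _).mp this
    · intro i j hij
      have := hb i.succ j.succ (by simpa using hij)
      rw [h2 (2 * i) (by omega) _ (by simp; ring), h2 (2 * j) (by omega) _ (by simp; ring)] at this
      exact (hlt _ _).mp this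
  · rintro ⟨ha, hb⟩
    constructor
    · intro i
      refine Fin.cases ?_ (fun i => ?_) i
      · simp only [Fin.val_zero, mul_zero, zero_add, h0, h1]
        exact Fin.succ_pos k
      · rw [h2 (2 * i) (by omega) _ (by simp; ring), h2 (2 * i + 1) (by omega) _ (by simp; ring)]
        exact (hlt _ _).mpr (ha i)
    · intro i j
      refine Fin.cases (fun h => ?_) (fun j => ?_) j
      · simp at h
      · refine Fin.cases (fun _ => ?_) (fun i hij => ?_) i
        · rw [h2 (2 * j) (by omega) (2 * (j.succ : Fin (n + 1))) (by simp; ring)]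
          exact h0.trans_lt (Fin.succ_pos _)
        · rw [h2 (2 * i) (by omega) _ (by simp; ring), h2 (2 * j) (by omega) _ (by simp; ring)]
          exact (hlt _ _).mpr (hb i j (by simpa using hij))

lemma pfaffian_succ {n : ℕ} (A : Matrix (Fin (2 * (n + 1))) (Fin (2 * (n + 1))) S) :
    pfaffian A = ∑ k : Fin (2 * n + 1), (-1) ^ (k : ℕ) * A (0 : Fin (2 * n + 1 + 1)) k.succ *
      pfaffian (A.submatrix (fun i => (k.succAbove i).succ) (fun i => (k.succAbove i).succ)) := by
  simp only [pfaffian, Finset.mul_sum]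
  rw [← Finset.sum_product']
  symm
  refine Finset.sum_bij (fun p _ => extendPerm p.1 p.2) ?_ ?_ ?_ ?_
  · rintro ⟨k, ρ⟩ h
    exact (extendPerm_mem_pfPerms k ρ).mpr (Finset.mem_product.mp h).2
  · rintro p - q - h
    exact extendPerm_injective h
  · intro σ hσ
    obtain ⟨k, ρ, rfl⟩ := exists_extendPerm σ (pfPerms_apply_zero hσ)
    exact ⟨(k, ρ), by simpa using (extendPerm_mem_pfPerms k ρ).mp hσ, rfl⟩
  · rintro ⟨k, ρ⟩ -
    have h2 : ∀ (j : ℕ) (hj : j < 2 * n) (j' : ℕ) (hj' : j' = j + 2),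
        extendPerm k ρ ⟨j', by omega⟩ = (k.succAbove (ρ ⟨j, hj⟩)).succ := by
      rintro j hj _ rfl; exact extendPerm_succ_succ k ρ ⟨j, hj⟩
    rw [Fin.prod_univ_succ, sign_extendPerm]
    have e0 : A (extendPerm k ρ ⟨2 * ((0 : Fin (n + 1)) : ℕ), by omega⟩)
        (extendPerm k ρ ⟨2 * ((0 : Fin (n + 1)) : ℕ) + 1, by omega⟩) =
        A (0 : Fin (2 * n + 1 + 1)) k.succ :=
      congrArg₂ A (extendPerm_zero k ρ) (extendPerm_one k ρ)
    rw [e0, Finset.prod_congr rfl fun (i : Fin n) _ => congrArg₂ A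
      (h2 (2 * i) (by omega) (2 * (i.succ : Fin (n + 1))) (by simp; ring))
      (h2 (2 * i + 1) (by omega) (2 * (i.succ : Fin (n + 1)) + 1) (by simp; ring))]
    simp only [Matrix.submatrix_apply, zsmul_eq_mul]
    push_cast
    ring

lemma pfaffian_eq_pfList (x : ι → ι → S) {n : ℕ} (v : Fin (2 * n) → ι) :
    pfaffian (Matrix.of fun i j => x (v i) (v j)) = pfList x (List.ofFn v) := by
  induction n with
  | zero => simp [pfaffian, pfPerms, Finset.filter_true_of_mem]
  | succ n ih =>
    rw [pfaffian_succ]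
    change _ = pfList x (List.ofFn (n := 2 * n + 1 + 1) v)
    rw [List.ofFn_succ, pfList_cons, expand_ofFn]
    exact Finset.sum_congr rfl fun k _ => congrArg _ (ih _)

end PfaffianOfList

section VariableElimination

/-- Multiplication by `a` is injective modulo `I`. -/
def NzdMod {S : Type*} [CommRing S] (a : S) (I : Ideal S) : Prop :=
  ∀ f, a * f ∈ I → f ∈ I

lemma NzdMod.sup_span_singleton {S : Type*} [CommRing S] {y g : S} {I : Ideal S}
    (hy : NzdMod y I) (hg : NzdMod g (I ⊔ Ideal.span {y})) : NzdMod y (I ⊔ Ideal.span {g}) := by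
  intro f hf
  obtain ⟨i, hi, z, hz, h⟩ := Submodule.mem_sup.mp hf
  obtain ⟨c, rfl⟩ := Ideal.mem_span_singleton'.mp hz
  have hc : c ∈ I ⊔ Ideal.span {y} := hg c <| by
    have : g * c = y * f - i := by rw [← h]; ring
    rw [this]
    exact sub_mem (Ideal.mem_sup_right (Ideal.mul_mem_right _ _ (Ideal.mem_span_singleton_self y)))
      (Ideal.mem_sup_left hi)
  obtain ⟨j, hj, w, hw, rfl⟩ := Submodule.mem_sup.mp hc
  obtain ⟨d, rfl⟩ := Ideal.mem_span_singleton'.mp hw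
  have : f - d * g ∈ I := hy _ <| by
    have : y * (f - d * g) = i + j * g := by linear_combination -h
    rw [this]
    exact add_mem hi (I.mul_mem_right _ hj)
  rw [← sub_add_cancel f (d * g)]
  exact add_mem (Ideal.mem_sup_left this)
    (Ideal.mem_sup_right (Ideal.mul_mem_left _ _ (Ideal.mem_span_singleton_self g)))

lemma NzdMod.congr {S : Type*} [CommRing S] {a b : S} {I : Ideal S} (h : a - b ∈ I)
    (ha : NzdMod a I) : NzdMod b I := fun f hf => ha f <| by
  rw [show a * f = (a - b) * f + b * f by ring]
  exact add_mem (I.mul_mem_right _ h) hf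

lemma Polynomial.eq_zero_of_linear_mul_eq_zero {B : Type*} [CommRing B] {a b : B}
    (ha : ∀ f, a * f = 0 → f = 0) {F : Polynomial B}
    (h : (Polynomial.C a * Polynomial.X + Polynomial.C b) * F = 0) : F = 0 := by
  rw [← Polynomial.leadingCoeff_eq_zero]
  apply ha
  have := congrArg (fun p => p.coeff (F.natDegree + 1)) h
  simpa [add_mul, mul_assoc, Polynomial.coeff_X_mul] using this

variable {σ : Type*} {Z : Type*} [CommRing Z]

open Classical in
/-- Replacing the variable `X s` by a new polynomial variable. -/
noncomputable def splitVar (Z : Type*) [CommRing Z] (s : σ) :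
    MvPolynomial σ Z →ₐ[Z] Polynomial (MvPolynomial σ Z) :=
  MvPolynomial.aeval fun t =>
    if t = s then Polynomial.X else Polynomial.C (MvPolynomial.X t)

lemma X_mem_supported_compl {s t : σ} (h : t ≠ s) :
    (MvPolynomial.X t : MvPolynomial σ Z) ∈ MvPolynomial.supported Z {s}ᶜ :=
  Algebra.subset_adjoin ⟨t, h, rfl⟩

lemma splitVar_of_mem_supported {s : σ} {f : MvPolynomial σ Z}
    (hf : f ∈ MvPolynomial.supported Z {s}ᶜ) : splitVar Z s f = Polynomial.C f := by
  induction hf using Algebra.adjoin_induction with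
  | mem x hx =>
    obtain ⟨t, ht, rfl⟩ := hx
    simp only [splitVar, MvPolynomial.aeval_X]
    rw [if_neg (by simpa using ht)]
  | algebraMap r =>
    rw [AlgHom.commutes]; rfl
  | add x y _ _ hx hy => rw [map_add, hx, hy, map_add]
  | mul x y _ _ hx hy => rw [map_mul, hx, hy, map_mul]

/-- If `I` and `a`, `b` do not involve the variable `s` and `a` is a nonzerodivisor modulo `I`,
then so is `a s + b`. -/
lemma nzdMod_linear (s : σ) {G : Set (MvPolynomial σ Z)} {a b : MvPolynomial σ Z}
    (hG : ∀ g ∈ G, g ∈ MvPolynomial.supported Z {s}ᶜ)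
    (ha : a ∈ MvPolynomial.supported Z {s}ᶜ) (hb : b ∈ MvPolynomial.supported Z {s}ᶜ)
    (hreg : NzdMod a (Ideal.span G)) :
    NzdMod (a * MvPolynomial.X s + b) (Ideal.span G) := by
  intro f hf
  let q := Ideal.Quotient.mk (Ideal.span G)
  let φ : MvPolynomial σ Z →+* Polynomial (MvPolynomial σ Z ⧸ Ideal.span G) :=
    (Polynomial.mapRingHom q).comp (splitVar Z s).toRingHom
  have hφ : ∀ h, φ h = Polynomial.map q (splitVar Z s h) := fun h => rfl
  have hker : Ideal.span G ≤ RingHom.ker φ := by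
    rw [Ideal.span_le]
    intro g hg
    simp only [SetLike.mem_coe, RingHom.mem_ker, hφ]
    rw [splitVar_of_mem_supported (hG g hg), Polynomial.map_C,
      Ideal.Quotient.eq_zero_iff_mem.mpr (Ideal.subset_span hg), map_zero]
  have hs : splitVar Z s (MvPolynomial.X s) = Polynomial.X := by simp [splitVar]
  have hzero : φ f = 0 := by
    refine Polynomial.eq_zero_of_linear_mul_eq_zero (a := q a) (b := q b) ?_ ?_
    · intro c hc
      obtain ⟨c, rfl⟩ := Ideal.Quotient.mk_surjective c
      rw [← map_mul, Ideal.Quotient.eq_zero_iff_mem] at hc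
      exact Ideal.Quotient.eq_zero_iff_mem.mpr (hreg c hc)
    · have := hker hf
      rw [RingHom.mem_ker, map_mul] at this
      rw [← this]
      congr 1
      simp [hφ, splitVar_of_mem_supported ha, splitVar_of_mem_supported hb, hs]
  have hev : ((Polynomial.evalRingHom (q (MvPolynomial.X s))).comp φ) = q := by
    apply MvPolynomial.ringHom_ext
    · intro r
      rw [RingHom.comp_apply, hφ, ← MvPolynomial.algebraMap_eq, AlgHom.commutes]
      simp [Polynomial.algebraMap_apply]
    · intro t
      rw [RingHom.comp_apply, hφ]
      by_cases h : t = s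
      · subst h; simp [hs]
      · rw [splitVar_of_mem_supported (X_mem_supported_compl h)]
        simp
  have := congrArg (fun ψ => ψ f) hev
  simp only [RingHom.comp_apply, hzero, map_zero] at this
  exact Ideal.Quotient.eq_zero_iff_mem.mp this.symm

lemma expand_mem_subalgebra {ι S : Type*} [CommRing S] (T : Subalgebra ℤ S) (w : ι → S)
    (f : List ι → S) (l : List ι) (hw : ∀ b ∈ l, w b ∈ T)
    (hf : ∀ l' : List ι, l'.length < l.length → l' ⊆ l → f l' ∈ T) : expand w f l ∈ T := by
  induction l generalizing f with
  | nil => simp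
  | cons b l ih =>
    rw [expand_cons]
    refine sub_mem (mul_mem (hw b (by simp)) (hf l (by simp) (by simp)))
      (ih _ (fun c hc => hw c (by simp [hc])) fun l' h1 h2 => hf _ (by simpa using h1) ?_)
    exact List.cons_subset_cons b h2

lemma pfList_mem_subalgebra {ι S : Type*} [CommRing S] (T : Subalgebra ℤ S) (x : ι → ι → S)
    (l : List ι) (h : ∀ a ∈ l, ∀ b ∈ l, x a b ∈ T) : pfList x l ∈ T := by
  induction hN : l.length using Nat.strong_induction_on generalizing l with
  | _ N ih =>
    cases l with
    | nil => simp
    | cons a l =>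
      rw [pfList_cons]
      refine expand_mem_subalgebra T _ _ _ (fun b hb => h a (by simp) b (by simp [hb])) ?_
      intro l' h1 h2
      refine ih l'.length (by simp at hN; omega) l' ?_ rfl
      intro c hc d hd
      exact h c (List.mem_cons_of_mem _ (h2 hc)) d (List.mem_cons_of_mem _ (h2 hd))

end VariableElimination

section GenericEntries

/-- Entries of the generic alternating matrix, numbered from the last row and column. -/
noncomputable def revPhi (n i j : ℕ) : HURing n :=
  if h : i < 2 * n ∧ j < 2 * n then
    huPhi n ⟨2 * n - 1 - i, by omega⟩ ⟨2 * n - 1 - j, by omega⟩ else 0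

/-- Entries of the generic vector, numbered from the last one. -/
noncomputable def revV (n j : ℕ) : HURing n :=
  if h : j < 2 * n then huV n ⟨2 * n - 1 - j, by omega⟩ else 0

/-- The variable at position `(i, j)` in the reversed numbering. -/
def entryVar (n i j : ℕ) (hj : j < i) (hi : i < 2 * n) :
    {p : Fin (2 * n) × Fin (2 * n) // p.1 < p.2} ⊕ Fin (2 * n) :=
  Sum.inl ⟨(⟨2 * n - 1 - i, by omega⟩, ⟨2 * n - 1 - j, by omega⟩), by
    simp only [Fin.lt_def]; omega⟩

/-- The `j`-th vector variable in the reversed numbering. -/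
def coordVar (n j : ℕ) (hj : j < 2 * n) :
    {p : Fin (2 * n) × Fin (2 * n) // p.1 < p.2} ⊕ Fin (2 * n) :=
  Sum.inr ⟨2 * n - 1 - j, by omega⟩

variable {n : ℕ}

lemma revPhi_eq_X {i j : ℕ} (hj : j < i) (hi : i < 2 * n) :
    revPhi n i j = MvPolynomial.X (entryVar n i j hj hi) := by
  have h : (⟨2 * n - 1 - i, by omega⟩ : Fin (2 * n)) < ⟨2 * n - 1 - j, by omega⟩ := by
    simp only [Fin.lt_def]; omega
  rw [revPhi, dif_pos ⟨hi, by omega⟩, huPhi, Matrix.of_apply, dif_pos h]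
  rfl

lemma revV_eq_X {j : ℕ} (hj : j < 2 * n) :
    revV n j = MvPolynomial.X (coordVar n j hj) := by
  rw [revV, dif_pos hj]; rfl

lemma huPhi_antisymm (i j : Fin (2 * n)) : huPhi n i j = - huPhi n j i := by
  simp only [huPhi, Matrix.of_apply]
  rcases lt_trichotomy i j with h | rfl | h
  · simp [h, h.not_gt]
  · simp
  · simp [h, h.not_gt]

lemma revPhi_antisymm (i j : ℕ) : revPhi n i j = - revPhi n j i := by
  unfold revPhi
  by_cases h : i < 2 * n ∧ j < 2 * n
  · rw [dif_pos h, dif_pos h.symm, huPhi_antisymm]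
  · rw [dif_neg h, dif_neg fun h' => h h'.symm, neg_zero]

lemma revPhi_self (i : ℕ) : revPhi n i i = 0 := self_eq_neg.mp (revPhi_antisymm i i)

lemma revPhi_mem_of_ne (s) (i j : ℕ)
    (h : ∀ i' j' hj hi, (i' = i ∧ j' = j) ∨ (i' = j ∧ j' = i) → entryVar n i' j' hj hi ≠ s) :
    revPhi n i j ∈ MvPolynomial.supported ℤ {s}ᶜ := by
  rcases lt_trichotomy i j with hij | rfl | hij
  · by_cases hj : j < 2 * n
    · rw [revPhi_antisymm, revPhi_eq_X hij hj]
      exact neg_mem (X_mem_supported_compl (h j i hij hj (by simp)))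
    · rw [revPhi, dif_neg (by omega)]; exact zero_mem _
  · rw [revPhi_self]; exact zero_mem _
  · by_cases hi : i < 2 * n
    · rw [revPhi_eq_X hij hi]
      exact X_mem_supported_compl (h i j hij hi (by simp))
    · rw [revPhi, dif_neg (by omega)]; exact zero_mem _

lemma revPhi_mem_coord (i j a : ℕ) (ha : a < 2 * n) :
    revPhi n i j ∈ MvPolynomial.supported ℤ {coordVar n a ha}ᶜ :=
  revPhi_mem_of_ne _ _ _ fun _ _ _ _ _ => by simp [entryVar, coordVar]

lemma revPhi_mem_entry (i j a b : ℕ) (hb : b < a) (ha : a < 2 * n)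
    (h : i = a → j ≠ b) (h' : i = b → j ≠ a) :
    revPhi n i j ∈ MvPolynomial.supported ℤ {entryVar n a b hb ha}ᶜ :=
  revPhi_mem_of_ne _ _ _ fun i' j' hj hi hij => by
    simp only [entryVar, ne_eq, Sum.inl.injEq, Subtype.mk.injEq, Prod.mk.injEq, Fin.mk.injEq]
    omega

lemma revV_mem_coord (i a : ℕ) (ha : a < 2 * n) (h : i ≠ a) :
    revV n i ∈ MvPolynomial.supported ℤ {coordVar n a ha}ᶜ := by
  by_cases hi : i < 2 * n
  · rw [revV_eq_X hi]
    refine X_mem_supported_compl ?_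
    simp only [coordVar, ne_eq, Sum.inr.injEq, Fin.mk.injEq]
    omega
  · rw [revV, dif_neg hi]; exact zero_mem _

lemma revV_mem_entry (i a b : ℕ) (hb : b < a) (ha : a < 2 * n) :
    revV n i ∈ MvPolynomial.supported ℤ {entryVar n a b hb ha}ᶜ := by
  by_cases hi : i < 2 * n
  · rw [revV_eq_X hi]
    exact X_mem_supported_compl (by simp [coordVar, entryVar])
  · rw [revV, dif_neg hi]; exact zero_mem _

/-- Entries of the product of the leading `p` columns with the vector. -/
noncomputable def rowForm (n p i : ℕ) : HURing n :=
  ∑ j ∈ Finset.range p, revPhi n i j * revV n j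

/-- The indices `p - 1, …, 0`. -/
def descList : ℕ → List ℕ
  | 0 => []
  | p + 1 => p :: descList p

lemma mem_descList {p a : ℕ} : a ∈ descList p ↔ a < p := by
  induction p with
  | zero => simp [descList]
  | succ p ih => simp [descList, ih]; omega

lemma length_descList (p : ℕ) : (descList p).length = p := by
  induction p with
  | zero => simp [descList]
  | succ p ih => simp [descList, ih]

/-- Pfaffian of the block of size `p` (zero for odd `p`). -/
noncomputable def blockPf (n p : ℕ) : HURing n := pfList (revPhi n) (descList p)

/-- The ideal generated by the vector entries with index at least `p`. -/
noncomputable def coordIdeal (n p : ℕ) : Ideal (HURing n) :=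
  Ideal.span (revV n '' Set.Ici p)

/-- The ideal generated by the vector entries with index at least `p` and the first `q`
entries of `Φ v`. -/
noncomputable def rowIdeal (n p q : ℕ) : Ideal (HURing n) :=
  coordIdeal n p ⊔ Ideal.span (rowForm n (2 * n) '' Set.Iio q)

/-- The ideal of Huneke–Ulrich type attached to the block of size `p`. -/
noncomputable def blockIdeal (n p : ℕ) : Ideal (HURing n) :=
  rowIdeal n p p ⊔ Ideal.span {blockPf n p}

lemma revV_mem_coordIdeal {p j : ℕ} (h : p ≤ j) : revV n j ∈ coordIdeal n p :=
  Ideal.subset_span ⟨j, h, rfl⟩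

lemma coordIdeal_le_rowIdeal (p q : ℕ) : coordIdeal n p ≤ rowIdeal n p q := le_sup_left

lemma rowIdeal_le_blockIdeal (p : ℕ) : rowIdeal n p p ≤ blockIdeal n p := le_sup_left

lemma coordIdeal_anti {p q : ℕ} (h : p ≤ q) : coordIdeal n q ≤ coordIdeal n p :=
  Ideal.span_mono (Set.image_mono (Set.Ici_subset_Ici.mpr h))

lemma rowIdeal_mono {p p' q q' : ℕ} (h : p' ≤ p) (h' : q ≤ q') :
    rowIdeal n p q ≤ rowIdeal n p' q' :=
  sup_le_sup (coordIdeal_anti h) (Ideal.span_mono (Set.image_mono (Set.Iio_subset_Iio h')))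

lemma revV_mem_rowIdeal {p q j : ℕ} (h : p ≤ j) : revV n j ∈ rowIdeal n p q :=
  coordIdeal_le_rowIdeal p q (revV_mem_coordIdeal h)

lemma rowForm_mem_rowIdeal {p q i : ℕ} (h : i < q) : rowForm n (2 * n) i ∈ rowIdeal n p q :=
  Ideal.mem_sup_right (Ideal.subset_span ⟨i, h, rfl⟩)

lemma blockPf_mem_blockIdeal (p : ℕ) : blockPf n p ∈ blockIdeal n p :=
  Ideal.mem_sup_right (Ideal.mem_span_singleton_self _)

lemma coordIdeal_eq_sup (p : ℕ) :
    coordIdeal n p = coordIdeal n (p + 1) ⊔ Ideal.span {revV n p} := by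
  rw [coordIdeal, coordIdeal, ← Ideal.span_union, ← Set.image_singleton, ← Set.image_union]
  congr 2; ext j; simp; omega

lemma rowIdeal_coord_succ (p q : ℕ) :
    rowIdeal n (p + 1) q ⊔ Ideal.span {revV n p} = rowIdeal n p q := by
  rw [rowIdeal, rowIdeal, coordIdeal_eq_sup p, sup_right_comm]

lemma rowIdeal_row_succ (p q : ℕ) :
    rowIdeal n p (q + 1) = rowIdeal n p q ⊔ Ideal.span {rowForm n (2 * n) q} := by
  rw [rowIdeal, rowIdeal, sup_assoc, ← Ideal.span_union, ← Set.image_singleton,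
    ← Set.image_union]
  congr 3; ext j; grind

lemma rowIdeal_zero (p : ℕ) : rowIdeal n p 0 = coordIdeal n p := by
  simp [rowIdeal]

lemma rowForm_sub_mem {p : ℕ} (hp : p ≤ 2 * n) (i : ℕ) :
    rowForm n (2 * n) i - rowForm n p i ∈ coordIdeal n p := by
  rw [rowForm, rowForm, ← Finset.sum_range_add_sum_Ico _ hp, add_sub_cancel_left]
  exact sum_mem fun j hj => Ideal.mul_mem_left _ _
    (revV_mem_coordIdeal (Finset.mem_Ico.mp hj).1)

lemma rowForm_mem_iff {p : ℕ} (hp : p ≤ 2 * n) (i : ℕ) {I : Ideal (HURing n)}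
    (hI : coordIdeal n p ≤ I) : rowForm n (2 * n) i ∈ I ↔ rowForm n p i ∈ I := by
  rw [← sub_add_cancel (rowForm n (2 * n) i) (rowForm n p i)]
  exact I.add_mem_iff_right (hI (rowForm_sub_mem hp i))

lemma rowIdeal_eq_span {p : ℕ} (hp : p ≤ 2 * n) (q : ℕ) :
    rowIdeal n p q = Ideal.span (revV n '' Set.Ici p ∪ rowForm n p '' Set.Iio q) := by
  apply le_antisymm
  · rw [rowIdeal, coordIdeal, ← Ideal.span_union, Ideal.span_le]
    rintro _ (h | ⟨i, hi, rfl⟩)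
    · exact Ideal.subset_span (Or.inl h)
    · rw [SetLike.mem_coe, rowForm_mem_iff hp _ (Ideal.span_mono Set.subset_union_left)]
      exact Ideal.subset_span (Or.inr ⟨i, hi, rfl⟩)
  · rw [Ideal.span_le]
    rintro _ (⟨j, hj, rfl⟩ | ⟨i, hi, rfl⟩)
    · exact revV_mem_rowIdeal hj
    · rw [SetLike.mem_coe, ← rowForm_mem_iff hp _ (coordIdeal_le_rowIdeal p q)]
      exact rowForm_mem_rowIdeal hi

lemma blockIdeal_eq_span {p : ℕ} (hp : p ≤ 2 * n) :
    blockIdeal n p = Ideal.span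
      ((revV n '' Set.Ici p ∪ rowForm n p '' Set.Iio p) ∪ {blockPf n p}) := by
  rw [blockIdeal, rowIdeal_eq_span hp, Ideal.span_union _ {_}]

lemma rowForm_mem_entry (p i a b : ℕ) (hb : b < a) (ha : a < 2 * n)
    (h : i = a → p ≤ b) (h' : i = b → p ≤ a) :
    rowForm n p i ∈ MvPolynomial.supported ℤ {entryVar n a b hb ha}ᶜ :=
  sum_mem fun j hj => mul_mem
    (revPhi_mem_entry _ _ _ _ _ _ (fun hi => by simp at hj; have := h hi; omega)
      (fun hi => by simp at hj; have := h' hi; omega)) (revV_mem_entry _ _ _ _ _)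

end GenericEntries

section BlockIdeals

variable {n : ℕ}

lemma sum_revV_mul_pfList_cons (p : ℕ) (l : List ℕ) :
    ∑ a ∈ Finset.range p, revV n a * pfList (revPhi n) (a :: l) =
      - expand (rowForm n p) (pfList (revPhi n)) l :=
  sum_mul_pfList_cons revPhi_antisymm _ _ _

/-- If all indices below `p` other than `i` occur in `l`, only one term survives. -/
lemma revV_mul_pfList_cons {p i : ℕ} (hi : i < p) (l : List ℕ)
    (h : ∀ a < p, a ≠ i → a ∈ l) :
    revV n i * pfList (revPhi n) (i :: l) = - expand (rowForm n p) (pfList (revPhi n)) l := by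
  rw [← sum_revV_mul_pfList_cons, Finset.sum_eq_single i]
  · intro a ha hai
    rw [pfList_cons_of_mem revPhi_antisymm a l (h a (Finset.mem_range.mp ha) hai), mul_zero]
  · intro h; simp [hi] at h

lemma rowForm_self_mem_rowIdeal {p q i : ℕ} (hp : p ≤ 2 * n) (h : i < q) :
    rowForm n p i ∈ rowIdeal n p q :=
  (rowForm_mem_iff hp i (coordIdeal_le_rowIdeal p q)).mp (rowForm_mem_rowIdeal h)

lemma expand_rowForm_mem {p q : ℕ} (hp : p ≤ 2 * n) (f : List ℕ → HURing n) (l : List ℕ)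
    (h : ∀ b ∈ l, b < q) : expand (rowForm n p) f l ∈ rowIdeal n p q :=
  expand_mem _ _ _ _ fun b hb => rowForm_self_mem_rowIdeal hp (h b hb)

lemma sum_revV_mul_rowForm :
    ∑ i ∈ Finset.range (2 * n), revV n i * rowForm n (2 * n) i = 0 := by
  have h : ∀ s : HURing n, s = - s → s = 0 := fun s hs => self_eq_neg.mp hs
  apply h
  simp only [rowForm, Finset.mul_sum]
  conv_lhs => rw [Finset.sum_comm]
  rw [← Finset.sum_neg_distrib]
  refine Finset.sum_congr rfl fun i _ => ?_
  rw [← Finset.sum_neg_distrib]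
  refine Finset.sum_congr rfl fun j _ => ?_
  rw [revPhi_antisymm]; ring

/-- Euler-type relation: the sum over the first `r` rows, modulo the remaining coordinates. -/
lemma sum_revV_mul_rowForm_mem (r : ℕ) (hr : r ≤ 2 * n) :
    ∑ i ∈ Finset.range r, revV n i * rowForm n (2 * n) i ∈ coordIdeal n r := by
  have h := sum_revV_mul_rowForm (n := n)
  rw [← Finset.sum_range_add_sum_Ico _ hr] at h
  rw [eq_neg_of_add_eq_zero_left h]
  exact neg_mem (sum_mem fun j hj => Ideal.mul_mem_right _ _
    (revV_mem_coordIdeal (Finset.mem_Ico.mp hj).1))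

lemma revV_mul_rowForm_mem (p : ℕ) (hp : p < 2 * n) :
    revV n p * rowForm n (2 * n) p ∈ rowIdeal n (p + 1) p := by
  have h := coordIdeal_le_rowIdeal (p + 1) p (sum_revV_mul_rowForm_mem (n := n) (p + 1) hp)
  rw [Finset.sum_range_succ] at h
  refine (Ideal.add_mem_iff_right _ (sum_mem fun i hi => ?_)).mp h
  exact Ideal.mul_mem_left _ _ (rowForm_mem_rowIdeal (Finset.mem_range.mp hi))

lemma revV_mul_rowForm_add_mem (r : ℕ) (hr : r + 2 ≤ 2 * n) :
    revV n r * rowForm n (2 * n) r + revV n (r + 1) * rowForm n (2 * n) (r + 1) ∈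
      rowIdeal n (r + 2) r := by
  have h := coordIdeal_le_rowIdeal (r + 2) r (sum_revV_mul_rowForm_mem (n := n) (r + 2) hr)
  rw [Finset.sum_range_succ, Finset.sum_range_succ, add_assoc] at h
  refine (Ideal.add_mem_iff_right _ (sum_mem fun i hi => ?_)).mp h
  exact Ideal.mul_mem_left _ _ (rowForm_mem_rowIdeal (Finset.mem_range.mp hi))

lemma blockPf_zero : blockPf n 0 = 1 := pfList_nil

lemma blockPf_odd {p : ℕ} (h : Odd p) : blockPf n p = 0 :=
  pfList_eq_zero_of_odd _ (by rwa [length_descList])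

lemma blockIdeal_zero : blockIdeal n 0 = ⊤ :=
  Ideal.eq_top_of_isUnit_mem _ (blockPf_mem_blockIdeal 0) (by simp [blockPf_zero])

lemma blockIdeal_odd {p : ℕ} (h : Odd p) : blockIdeal n p = rowIdeal n p p := by
  simp [blockIdeal, blockPf_odd h]

lemma revV_mul_blockPf_top (p : ℕ) :
    revV n p * blockPf n (p + 1) =
      - expand (rowForm n (p + 1)) (pfList (revPhi n)) (descList p) :=
  revV_mul_pfList_cons (Nat.lt_succ_self p) _ fun a h1 h2 => mem_descList.mpr (by omega)

lemma revV_mul_blockPf_top_mem (p : ℕ) (hp : p < 2 * n) :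
    revV n p * blockPf n (p + 1) ∈ rowIdeal n (p + 1) p := by
  rw [revV_mul_blockPf_top]
  exact neg_mem (expand_rowForm_mem hp _ _ fun b hb => mem_descList.mp hb)

lemma revV_mul_blockPf_mem (p i : ℕ) (hp : p ≤ 2 * n) :
    revV n i * blockPf n p ∈ rowIdeal n p p := by
  by_cases hi : i < p
  · obtain ⟨l₁, l₂, hl⟩ := List.append_of_mem (mem_descList.mpr hi)
    have hm : ∀ a, a ∈ descList p ↔ a = i ∨ a ∈ l₁ ++ l₂ := by
      intro a; rw [hl]; simp; tauto
    rw [blockPf, hl, (pfList_isAlternating revPhi_antisymm).move, mul_left_comm,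
      revV_mul_pfList_cons hi _ fun a h1 h2 => by
        simpa [h2] using (hm a).mp (mem_descList.mpr h1)]
    refine Ideal.mul_mem_left _ _ (neg_mem (expand_rowForm_mem hp _ _ fun b hb => ?_))
    exact mem_descList.mp ((hm b).mpr (Or.inr hb))
  · exact Ideal.mul_mem_right _ _ (revV_mem_rowIdeal (not_lt.mp hi))

lemma revV_succ_mul_blockPf_mem (r : ℕ) (hr : r + 2 ≤ 2 * n) :
    revV n (r + 1) * blockPf n (r + 2) + blockPf n r * rowForm n (2 * n) r ∈
      rowIdeal n (r + 2) r := by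
  rw [revV_mul_blockPf_top, descList, expand_cons]
  have h1 := expand_rowForm_mem hr (fun l => pfList (revPhi n) (r :: l)) (descList r)
    fun b hb => mem_descList.mp hb
  have h2 := coordIdeal_le_rowIdeal (r + 2) r (rowForm_sub_mem hr r)
  convert add_mem h1 (Ideal.mul_mem_left _ (blockPf n r) h2) using 1
  rw [blockPf]; ring

lemma revV_mul_blockPf_sub_mem (r : ℕ) (hr : r + 2 ≤ 2 * n) :
    revV n r * blockPf n (r + 2) - blockPf n r * rowForm n (2 * n) (r + 1) ∈
      rowIdeal n (r + 2) r := by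
  have h : blockPf n (r + 2) = - pfList (revPhi n) (r :: (r + 1) :: descList r) :=
    pfList_isAlternating revPhi_antisymm [] _ _ _
  rw [h, mul_neg, revV_mul_pfList_cons (p := r + 2) (by omega) _ fun a h1 h2 => by
    simp only [List.mem_cons, mem_descList]; omega, expand_cons]
  have h1 := expand_rowForm_mem hr (fun l => pfList (revPhi n) ((r + 1) :: l)) (descList r)
    fun b hb => mem_descList.mp hb
  have h2 := coordIdeal_le_rowIdeal (r + 2) r (rowForm_sub_mem hr (r + 1))
  convert neg_mem (add_mem h1 (Ideal.mul_mem_left _ (blockPf n r) h2)) using 1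
  rw [blockPf]; ring

lemma blockPf_mul_rowForm_mem (p : ℕ) (hp : p < 2 * n) :
    blockPf n p * rowForm n (2 * n) p ∈ rowIdeal n (p + 1) p := by
  have h := sum_revV_mul_pfList_cons (n := n) (p + 1) (descList (p + 1))
  rw [Finset.sum_eq_zero fun a ha => by
    rw [pfList_cons_of_mem revPhi_antisymm _ _ (mem_descList.mpr (Finset.mem_range.mp ha)),
      mul_zero], descList, expand_cons] at h
  have h1 := expand_rowForm_mem hp (fun l => pfList (revPhi n) (p :: l)) (descList p)
    fun b hb => mem_descList.mp hb
  have h2 := coordIdeal_le_rowIdeal (p + 1) p (rowForm_sub_mem hp p)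
  convert add_mem h1 (Ideal.mul_mem_left _ (blockPf n p) h2) using 1
  rw [blockPf]; simp only [Nat.succ_eq_add_one]; linear_combination h

/-- The vector variable with index `p` is a nonzerodivisor modulo the later ones. -/
lemma nzdMod_revV_coordIdeal (p : ℕ) (hp : p < 2 * n) :
    NzdMod (revV n p) (coordIdeal n (p + 1)) := by
  have := nzdMod_linear (coordVar n p hp) (Z := ℤ) (G := revV n '' Set.Ici (p + 1)) (a := 1)
    (b := 0) ?_ (one_mem _) (zero_mem _) (fun f hf => by simpa using hf)
  · rw [revV_eq_X hp]
    simpa [coordIdeal] using this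
  · rintro _ ⟨j, hj, rfl⟩
    exact revV_mem_coord _ _ _ (by simp at hj; omega)

lemma nzdMod_rowForm_of_revV {p q : ℕ} (hq : q < p) (hp : p < 2 * n)
    (h : NzdMod (revV n p) (rowIdeal n (p + 1) q)) :
    NzdMod (rowForm n (2 * n) q) (rowIdeal n (p + 1) q) := by
  have key : NzdMod (rowForm n (p + 1) q) (rowIdeal n (p + 1) q) := by
    have e : rowForm n (p + 1) q = (- revV n p) * MvPolynomial.X (entryVar n p q hq hp) +
        rowForm n p q := by
      rw [rowForm, Finset.sum_range_succ, ← rowForm, ← revPhi_eq_X, revPhi_antisymm q p]; ring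
    rw [e]
    rw [rowIdeal_eq_span hp] at h ⊢
    apply nzdMod_linear
    · rintro _ (⟨j, hj, rfl⟩ | ⟨i, hi, rfl⟩)
      · exact revV_mem_entry _ _ _ _ _
      · simp only [Set.mem_Iio] at hi
        exact rowForm_mem_entry _ _ _ _ _ _ (by omega) (by omega)
    · exact neg_mem (revV_mem_entry _ _ _ _ _)
    · exact rowForm_mem_entry _ _ _ _ _ _ (by omega) (by omega)
    · intro f hf
      exact h f (by simpa using neg_mem hf)
  refine key.congr ?_
  rw [← neg_sub]
  exact neg_mem (coordIdeal_le_rowIdeal _ _ (rowForm_sub_mem hp q))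

lemma nzdMod_revV_rowIdeal (q : ℕ) : ∀ p, q ≤ p - 1 → p < 2 * n →
    NzdMod (revV n p) (rowIdeal n (p + 1) q) := by
  induction q with
  | zero => intro p _ hp; rw [rowIdeal_zero]; exact nzdMod_revV_coordIdeal p hp
  | succ q ih =>
    intro p hq hp
    obtain ⟨p, rfl⟩ : ∃ r, p = r + 1 := ⟨p - 1, by omega⟩
    rw [rowIdeal_row_succ]
    refine (ih _ (by omega) hp).sup_span_singleton ?_
    rw [rowIdeal_coord_succ]
    exact nzdMod_rowForm_of_revV (by omega) (by omega) (ih p (by omega) (by omega))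

lemma nzdMod_rowForm_rowIdeal (q p : ℕ) (hq : q < p) (hp : p < 2 * n) :
    NzdMod (rowForm n (2 * n) q) (rowIdeal n (p + 1) q) :=
  nzdMod_rowForm_of_revV hq hp (nzdMod_revV_rowIdeal q p (by omega) hp)

lemma nzdMod_blockPf (r : ℕ) (hr : 2 * r ≤ 2 * n) :
    NzdMod (blockPf n (2 * r)) (coordIdeal n 0) := by
  induction r with
  | zero => intro f hf; simpa [blockPf_zero] using hf
  | succ r ih =>
    have e : blockPf n (2 * r + 1 + 1) =
        blockPf n (2 * r) * MvPolynomial.X (entryVar n (2 * r + 1) (2 * r) (by omega) (by omega))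
        + - expand (revPhi n (2 * r + 1)) (fun l => pfList (revPhi n) (2 * r :: l))
            (descList (2 * r)) := by
      rw [blockPf, descList, pfList_cons, descList, expand_cons, ← revPhi_eq_X, blockPf]; ring
    rw [show 2 * (r + 1) = 2 * r + 1 + 1 by ring, e]
    apply nzdMod_linear
    · rintro _ ⟨j, hj, rfl⟩
      exact revV_mem_entry _ _ _ _ _
    · refine pfList_mem_subalgebra _ _ _ fun a ha b hb => ?_
      rw [mem_descList] at ha hb
      exact revPhi_mem_entry _ _ _ _ _ _ (by omega) (by omega)
    · refine neg_mem (expand_mem_subalgebra _ _ _ _ (fun b hb => ?_) fun l' _ hl' => ?_)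
      · rw [mem_descList] at hb
        exact revPhi_mem_entry _ _ _ _ _ _ (by omega) (by omega)
      · refine pfList_mem_subalgebra _ _ _ fun a ha b hb => ?_
        have : ∀ c ∈ 2 * r :: l', c < 2 * r + 1 := by
          intro c hc
          rcases List.mem_cons.mp hc with rfl | hc
          · omega
          · have := mem_descList.mp (hl' hc); omega
        have h1 := this a ha
        have h2 := this b hb
        exact revPhi_mem_entry _ _ _ _ _ _ (by omega) (by omega)
    · exact ih (by omega)

/-- `g_p` is a nonzerodivisor modulo the ideal of the preceding block. -/
lemma nzdMod_rowForm_blockIdeal {p : ℕ} (hp : p + 1 < 2 * n)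
    (h : NzdMod (revV n p) (blockIdeal n (p + 1))) :
    NzdMod (rowForm n (2 * n) (p + 1)) (blockIdeal n (p + 1)) := by
  have key : NzdMod (rowForm n (p + 1) (p + 1)) (blockIdeal n (p + 1)) := by
    have e : rowForm n (p + 1) (p + 1) =
        revV n p * MvPolynomial.X (entryVar n (p + 1) p (by omega) hp) +
        rowForm n p (p + 1) := by
      rw [rowForm, Finset.sum_range_succ, ← rowForm, ← revPhi_eq_X]; ring
    rw [e]
    rw [blockIdeal_eq_span hp.le] at h ⊢
    apply nzdMod_linear
    · rintro _ ((⟨j, hj, rfl⟩ | ⟨i, hi, rfl⟩) | rfl)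
      · exact revV_mem_entry _ _ _ _ _
      · simp only [Set.mem_Iio] at hi
        exact rowForm_mem_entry _ _ _ _ _ _ (by omega) (by omega)
      · refine pfList_mem_subalgebra _ _ _ fun a ha b hb => ?_
        rw [mem_descList] at ha hb
        exact revPhi_mem_entry _ _ _ _ _ _ (by omega) (by omega)
    · exact revV_mem_entry _ _ _ _ _
    · exact rowForm_mem_entry _ _ _ _ _ _ (by omega) (by omega)
    · exact h
  refine key.congr ?_
  rw [← neg_sub]
  exact neg_mem ((coordIdeal_le_rowIdeal _ _).trans (rowIdeal_le_blockIdeal _)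
    (rowForm_sub_mem hp.le (p + 1)))

lemma mul_mem_of_mem_span {S : Type*} [CommRing S] {U : Set S} {L : Ideal S} {g c : S}
    (h : ∀ u ∈ U, u * g ∈ L) (hc : c ∈ Ideal.span U) : c * g ∈ L := by
  induction hc using Submodule.span_induction with
  | mem u hu => exact h u hu
  | zero => simp
  | add a b _ _ ha hb => rw [add_mul]; exact add_mem ha hb
  | smul r a _ ha => rw [smul_eq_mul, mul_assoc]; exact Ideal.mul_mem_left _ _ ha

lemma blockIdeal_eq_span' (p : ℕ) : blockIdeal n p =
    Ideal.span ((revV n '' Set.Ici p ∪ rowForm n (2 * n) '' Set.Iio p) ∪ {blockPf n p}) := by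
  rw [blockIdeal, rowIdeal, coordIdeal, Ideal.span_union, Ideal.span_union]

lemma mul_mem_of_mem_blockIdeal {p : ℕ} {L : Ideal (HURing n)} {g c : HURing n}
    (h1 : ∀ j, p ≤ j → revV n j * g ∈ L) (h2 : ∀ i < p, rowForm n (2 * n) i * g ∈ L)
    (h3 : blockPf n p * g ∈ L) (hc : c ∈ blockIdeal n p) : c * g ∈ L := by
  rw [blockIdeal_eq_span'] at hc
  refine mul_mem_of_mem_span ?_ hc
  rintro _ ((⟨j, hj, rfl⟩ | ⟨i, hi, rfl⟩) | rfl)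
  exacts [h1 j hj, h2 i hi, h3]

lemma nzdMod_rowForm_of_nzdMod_revV {p : ℕ} (hp : p < 2 * n)
    (h : ∀ r, r + 1 = p → NzdMod (revV n r) (blockIdeal n (r + 1))) :
    NzdMod (rowForm n (2 * n) p) (blockIdeal n p) := by
  cases p with
  | zero => intro f _; rw [blockIdeal_zero]; trivial
  | succ r => exact nzdMod_rowForm_blockIdeal hp (h r rfl)

/-- One half of the linkage: `rowIdeal (p + 1) p : y_p` is contained in the block ideal. -/
lemma mem_blockIdeal_of_revV_mul_mem {p : ℕ} (hp : p < 2 * n)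
    (h : ∀ r, r + 1 < p → NzdMod (revV n r) (blockIdeal n (r + 1))) (f : HURing n)
    (hf : revV n p * f ∈ rowIdeal n (p + 1) p) : f ∈ blockIdeal n (p + 1) := by
  cases p with
  | zero =>
    exact rowIdeal_le_blockIdeal _ (rowIdeal_mono le_rfl (Nat.zero_le _)
      (nzdMod_revV_rowIdeal 0 0 le_rfl hp f hf))
  | succ r =>
    have hP := nzdMod_rowForm_of_nzdMod_revV (p := r) (n := n) (by omega)
      fun s hs => h s (by omega)
    have hY := nzdMod_revV_rowIdeal (n := n) r (r + 1) (by omega) hp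
    set K := rowIdeal n (r + 2) r
    set B := blockIdeal n (r + 2)
    have hKB : K ≤ B := (rowIdeal_mono le_rfl (by omega)).trans (rowIdeal_le_blockIdeal _)
    have hyB : ∀ {h}, h ∈ B → revV n (r + 1) * h ∈ K ⊔ Ideal.span {revV n (r + 1)} * B :=
      fun hh => Ideal.mem_sup_right (Ideal.mul_mem_mul (Ideal.mem_span_singleton_self _) hh)
    rw [rowIdeal_row_succ] at hf
    obtain ⟨k, hk, z, hz, hkz⟩ := Submodule.mem_sup.mp hf
    obtain ⟨c, rfl⟩ := Ideal.mem_span_singleton'.mp hz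
    have hc : c ∈ blockIdeal n r := hP c <| rowIdeal_le_blockIdeal r <| by
      have e : rowForm n (2 * n) r * c = revV n (r + 1) * f - k := by rw [← hkz]; ring
      rw [e]
      exact sub_mem (Ideal.mul_mem_right _ _ (revV_mem_rowIdeal (by omega)))
        (rowIdeal_mono (by omega) le_rfl hk)
    have hcL : c * rowForm n (2 * n) r ∈ K ⊔ Ideal.span {revV n (r + 1)} * B := by
      refine mul_mem_of_mem_blockIdeal (fun j hj => ?_) (fun i hi => ?_) ?_ hc
      · rcases (by omega : j = r ∨ j = r + 1 ∨ r + 2 ≤ j) with rfl | rfl | hj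
        · rw [← add_sub_cancel_right (revV n j * _) (revV n (j + 1) * rowForm n (2 * n) (j + 1))]
          exact sub_mem (Ideal.mem_sup_left (revV_mul_rowForm_add_mem j hp))
            (hyB (rowIdeal_le_blockIdeal _ (rowForm_mem_rowIdeal (by omega))))
        · exact hyB (rowIdeal_le_blockIdeal _ (rowForm_mem_rowIdeal (by omega)))
        · exact Ideal.mem_sup_left (Ideal.mul_mem_right _ _ (revV_mem_rowIdeal hj))
      · exact Ideal.mem_sup_left (Ideal.mul_mem_right _ _ (rowForm_mem_rowIdeal hi))
      · rw [← add_sub_cancel_left (revV n (r + 1) * blockPf n (r + 2)) (blockPf n r * _)]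
        exact sub_mem (Ideal.mem_sup_left (revV_succ_mul_blockPf_mem r hp))
          (hyB (blockPf_mem_blockIdeal _))
    obtain ⟨k', hk', z, hz, hkz'⟩ := Submodule.mem_sup.mp hcL
    obtain ⟨h', hh', rfl⟩ := Ideal.mem_span_singleton_mul.mp hz
    rw [← sub_add_cancel f h']
    refine add_mem (hKB (hY _ ?_)) hh'
    rw [show revV n (r + 1) * (f - h') = k + k' by linear_combination -hkz - hkz']
    exact add_mem hk hk'

lemma mem_blockIdeal_of_revV_mul_mem_rowIdeal {p : ℕ} (hp : p < 2 * n)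
    (h : ∀ r < p, NzdMod (revV n r) (blockIdeal n (r + 1))) (f : HURing n)
    (hf : revV n p * f ∈ rowIdeal n (p + 1) (p + 1)) : f ∈ blockIdeal n (p + 1) := by
  have hP := nzdMod_rowForm_of_nzdMod_revV (n := n) hp fun s hs => h s (by omega)
  rw [rowIdeal_row_succ] at hf
  obtain ⟨k, hk, z, hz, hkz⟩ := Submodule.mem_sup.mp hf
  obtain ⟨c, rfl⟩ := Ideal.mem_span_singleton'.mp hz
  have hc : c ∈ blockIdeal n p := hP c <| rowIdeal_le_blockIdeal p <| by
    have e : rowForm n (2 * n) p * c = revV n p * f - k := by rw [← hkz]; ring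
    rw [e]
    exact sub_mem (Ideal.mul_mem_right _ _ (revV_mem_rowIdeal le_rfl))
      (rowIdeal_mono (by omega) le_rfl hk)
  have hcL : c * rowForm n (2 * n) p ∈
      rowIdeal n (p + 1) p ⊔ Ideal.span {revV n p} * blockIdeal n (p + 1) := by
    refine mul_mem_of_mem_blockIdeal (fun j hj => ?_) (fun i hi => ?_)
      (Ideal.mem_sup_left (blockPf_mul_rowForm_mem p hp)) hc
    · rcases hj.eq_or_lt with rfl | hj
      · exact Ideal.mem_sup_right (Ideal.mul_mem_mul (Ideal.mem_span_singleton_self _)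
          (rowIdeal_le_blockIdeal _ (rowForm_mem_rowIdeal (by omega))))
      · exact Ideal.mem_sup_left (Ideal.mul_mem_right _ _ (revV_mem_rowIdeal hj))
    · exact Ideal.mem_sup_left (Ideal.mul_mem_right _ _ (rowForm_mem_rowIdeal hi))
  obtain ⟨k', hk', z, hz, hkz'⟩ := Submodule.mem_sup.mp hcL
  obtain ⟨h', hh', rfl⟩ := Ideal.mem_span_singleton_mul.mp hz
  rw [← sub_add_cancel f h']
  refine add_mem (mem_blockIdeal_of_revV_mul_mem hp (fun r hr => h r (by omega)) _ ?_) hh'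
  rw [show revV n p * (f - h') = k + k' by linear_combination -hkz - hkz']
  exact add_mem hk hk'

lemma rowIdeal_le_coordIdeal_zero (p q : ℕ) : rowIdeal n p q ≤ coordIdeal n 0 := by
  refine sup_le (coordIdeal_anti (Nat.zero_le _)) (Ideal.span_le.mpr ?_)
  rintro _ ⟨i, -, rfl⟩
  exact sum_mem fun j _ => Ideal.mul_mem_left _ _ (revV_mem_coordIdeal (Nat.zero_le _))

lemma coordIdeal_zero_mul_blockPf {p : ℕ} (hp : p ≤ 2 * n) {e : HURing n}
    (he : e ∈ coordIdeal n 0) : e * blockPf n p ∈ rowIdeal n p p := by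
  refine mul_mem_of_mem_span ?_ he
  rintro _ ⟨i, -, rfl⟩
  exact revV_mul_blockPf_mem p i hp

theorem nzdMod_revV_blockIdeal (p : ℕ) (hp : p < 2 * n) :
    NzdMod (revV n p) (blockIdeal n (p + 1)) := by
  induction p using Nat.strong_induction_on with
  | _ p ih =>
  have ih' : ∀ r < p, NzdMod (revV n r) (blockIdeal n (r + 1)) := fun r hr => ih r hr (by omega)
  intro f hf
  refine mem_blockIdeal_of_revV_mul_mem_rowIdeal hp ih' f ?_
  rcases Nat.even_or_odd p with hpe | hpo
  · rwa [blockIdeal_odd hpe.add_one] at hf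
  obtain ⟨s, rfl⟩ := hpo
  have hP := nzdMod_rowForm_of_nzdMod_revV (n := n) hp fun s hs => ih' s (by omega)
  obtain ⟨k, hk, z, hz, hkz⟩ := Submodule.mem_sup.mp hf
  obtain ⟨e, rfl⟩ := Ideal.mem_span_singleton'.mp hz
  rw [rowIdeal_row_succ] at hk
  obtain ⟨k, hk', z, hz, hkz'⟩ := Submodule.mem_sup.mp hk
  obtain ⟨c, rfl⟩ := Ideal.mem_span_singleton'.mp hz
  set r := 2 * s
  have hmem : revV n r * c + blockPf n r * e ∈ coordIdeal n 0 := by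
    refine rowIdeal_le_coordIdeal_zero (r + 1) (r + 1) ?_
    rw [← blockIdeal_odd ⟨s, rfl⟩]
    refine hP _ (rowIdeal_le_blockIdeal _ ?_)
    have h1 := rowIdeal_mono (n := n) (show r + 1 ≤ r + 2 by omega) (show r ≤ r + 1 by omega)
      (revV_mul_blockPf_sub_mem r hp)
    have h2 : revV n r * (revV n (r + 1) * f) ∈ rowIdeal n (r + 1) (r + 1) :=
      Ideal.mul_mem_left _ _ (Ideal.mul_mem_right _ _ (revV_mem_rowIdeal le_rfl))
    have h3 : revV n r * k ∈ rowIdeal n (r + 1) (r + 1) :=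
      Ideal.mul_mem_left _ _ (rowIdeal_mono (by omega) le_rfl hk')
    convert sub_mem (sub_mem h2 h3) (Ideal.mul_mem_left _ e h1) using 1
    rw [← hkz, ← hkz']; ring
  have he : e ∈ coordIdeal n 0 := nzdMod_blockPf s (by omega) e <|
    (Ideal.add_mem_iff_right _ (Ideal.mul_mem_right _ _
      (revV_mem_coordIdeal (Nat.zero_le _)))).mp hmem
  rw [← hkz]
  refine add_mem (by rwa [rowIdeal_row_succ]) ?_
  exact coordIdeal_zero_mul_blockPf hp he

lemma revV_mul_mem_iff {p : ℕ} (hp : p < 2 * n) (f : HURing n) :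
    revV n p * f ∈ rowIdeal n (p + 1) p ↔ f ∈ blockIdeal n (p + 1) := by
  refine ⟨mem_blockIdeal_of_revV_mul_mem hp
    (fun r hr => nzdMod_revV_blockIdeal r (by omega)) f, fun hf => ?_⟩
  rw [mul_comm (revV n p) f]
  refine mul_mem_of_mem_blockIdeal (fun j hj => Ideal.mul_mem_right _ _ (revV_mem_rowIdeal hj))
    (fun i hi => ?_) ?_ hf
  · rcases Nat.lt_succ_iff_lt_or_eq.mp hi with hi | rfl
    · exact Ideal.mul_mem_right _ _ (rowForm_mem_rowIdeal hi)
    · rw [mul_comm (rowForm _ _ _)]; exact revV_mul_rowForm_mem i hp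
  · rw [mul_comm (blockPf _ _)]; exact revV_mul_blockPf_top_mem p hp

lemma mul_blockPf_mem_iff {p : ℕ} (he : Even p) (hp : p ≤ 2 * n) (f : HURing n) :
    blockPf n p * f ∈ rowIdeal n p p ↔ f ∈ coordIdeal n 0 := by
  refine ⟨fun h => ?_, fun h => by rw [mul_comm _ f]; exact coordIdeal_zero_mul_blockPf hp h⟩
  obtain ⟨r, rfl⟩ := he.two_dvd
  exact nzdMod_blockPf r hp f (rowIdeal_le_coordIdeal_zero _ _ h)

lemma coordIdeal_eq_bot : coordIdeal n (2 * n) = ⊥ := by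
  rw [coordIdeal, Ideal.span_eq_bot]
  rintro _ ⟨j, hj, rfl⟩
  rw [revV, dif_neg (by simpa using hj)]

lemma descList_eq_ofFn (p : ℕ) :
    descList p = List.ofFn fun i : Fin p => p - 1 - (i : ℕ) := by
  induction p with
  | zero => simp [descList]
  | succ p ih =>
    rw [List.ofFn_succ, descList, ih]
    simp only [Fin.val_zero, Fin.val_succ]
    congr 1
    congr 1
    ext i; omega

lemma blockPf_top : blockPf n (2 * n) = pfaffian (huPhi n) := by
  rw [blockPf, descList_eq_ofFn, ← pfaffian_eq_pfList]
  congr 1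
  ext1 i j
  rw [Matrix.of_apply, revPhi, dif_pos (by omega)]
  congr 1 <;> ext <;> simp <;> omega

lemma rowForm_top (i : Fin (2 * n)) :
    rowForm n (2 * n) (2 * n - 1 - i) = (huPhi n).mulVec (huV n) i := by
  rw [rowForm, Matrix.mulVec, dotProduct, Finset.sum_range, ← Equiv.sum_comp Fin.revPerm]
  refine Finset.sum_congr rfl fun j _ => ?_
  rw [revPhi, dif_pos (by omega), revV, dif_pos (by omega)]
  congr 2 <;> simp only [Fin.revPerm_apply, Fin.val_rev, Fin.ext_iff] <;> omega

lemma blockIdeal_top : blockIdeal n (2 * n) = huIdeal n := by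
  rw [blockIdeal, rowIdeal, coordIdeal_eq_bot, bot_sup_eq, huIdeal, ← Ideal.span_union,
    blockPf_top]
  congr 1
  ext f
  simp only [huGens, Fin.range_snoc, Set.union_singleton, Set.mem_insert_iff]
  refine or_congr Iff.rfl ⟨?_, ?_⟩
  · rintro ⟨i, hi, rfl⟩
    simp only [Set.mem_Iio] at hi
    refine ⟨⟨2 * n - 1 - i, by omega⟩, ?_⟩
    rw [← rowForm_top]
    congr 1; simp; omega
  · rintro ⟨i, rfl⟩
    exact ⟨2 * n - 1 - i, by simp; omega, rowForm_top i⟩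

end BlockIdeals

section MinimalGenerators

open MvPolynomial

/-- If the coefficient functionals at the monomials `M k` vanish below `M k` on a generating set
and separate it, then every generating set of the ideal has at least as many elements. -/
lemma card_le_of_coeff_separating {σ κ : Type*} [Fintype κ] [DecidableEq κ]
    (M : κ → σ →₀ ℕ) (gen : κ → MvPolynomial σ ℤ)
    (hlow : ∀ i k d, d < M k → coeff d (gen i) = 0)
    (hunit : ∀ k, IsUnit (coeff (M k) (gen k)))
    (hoff : ∀ i k, i ≠ k → coeff (M k) (gen i) = 0)
    (s : Finset (MvPolynomial σ ℤ)) (hs : Ideal.span (s : Set (MvPolynomial σ ℤ)) =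
      Ideal.span (Set.range gen)) : Fintype.card κ ≤ s.card := by
  classical
  let D : MvPolynomial σ ℤ →ₗ[ℤ] (κ → ℤ) := LinearMap.pi fun k => lcoeff ℤ (M k)
  have hD : ∀ f k, D f k = coeff (M k) f := fun f k => rfl
  have hlowJ : ∀ f ∈ Ideal.span (Set.range gen), ∀ k d, d < M k → coeff d f = 0 := by
    intro f hf
    induction hf using Submodule.span_induction with
    | mem f hf => obtain ⟨i, rfl⟩ := hf; exact hlow i
    | zero => simp
    | add f g _ _ hf hg => intro k d hd; rw [coeff_add, hf k d hd, hg k d hd, add_zero]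
    | smul a f _ hf =>
      intro k d hd
      rw [smul_eq_mul, coeff_mul]
      refine Finset.sum_eq_zero fun p hp => ?_
      rw [hf k p.2 (lt_of_le_of_lt
      (by rw [← Finset.HasAntidiagonal.mem_antidiagonal.mp hp]; simp) hd), mul_zero]
  have hmul : ∀ a, ∀ f ∈ Ideal.span (Set.range gen), D (a * f) = coeff 0 a • D f := by
    intro a f hf
    ext k
    rw [Pi.smul_apply, hD, hD, coeff_mul, Finset.sum_eq_single (0, M k)]
    · rfl
    · intro p hp hne
      have hp' := Finset.HasAntidiagonal.mem_antidiagonal.mp hp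
      have hle : p.2 ≤ M k := by rw [← hp']; simp
      rw [hlowJ f hf k p.2 (lt_of_le_of_ne hle fun h => hne ?_), mul_zero]
      refine Prod.ext ?_ h
      rw [h] at hp'
      exact add_eq_right.mp hp'
    · simp
  have hspan : ∀ f ∈ Ideal.span (s : Set (MvPolynomial σ ℤ)),
      D f ∈ Submodule.span ℤ (s.image D : Set (κ → ℤ)) := by
    intro f hf
    induction hf using Submodule.span_induction with
    | mem f hf => exact Submodule.subset_span (by simpa using ⟨f, hf, rfl⟩)
    | zero => simp
    | add f g _ _ hf hg => rw [map_add]; exact add_mem hf hg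
    | smul a f hf' hf =>
      rw [smul_eq_mul, hmul a f (hs ▸ hf')]
      exact Submodule.smul_mem _ _ hf
  have htop : Submodule.span ℤ (s.image D : Set (κ → ℤ)) = ⊤ := by
    rw [eq_top_iff, ← (Pi.basisFun ℤ κ).span_eq, Submodule.span_le]
    rintro _ ⟨k, rfl⟩
    obtain ⟨u, hu⟩ := hunit k
    have h1 := hspan (gen k) (by rw [hs]; exact Ideal.subset_span ⟨k, rfl⟩)
    have h2 : Pi.basisFun ℤ κ k = (↑u⁻¹ : ℤ) • D (gen k) := by
      ext i
      rw [Pi.smul_apply, hD]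
      by_cases h : k = i
      · subst h; simp [← hu]
      · rw [hoff k i h]; simp [Ne.symm h]
    rw [h2]
    exact Submodule.smul_mem _ _ h1
  have := finrank_span_finset_le_card (R := ℤ) (s.image D)
  rw [Set.finrank, htop, finrank_top, Module.finrank_fintype_fun_eq_card] at this
  exact this.trans Finset.card_image_le

lemma coeff_eq_zero_of_mem_supported {σ : Type*} {s : σ} {f : MvPolynomial σ ℤ}
    (hf : f ∈ supported ℤ {s}ᶜ) {d : σ →₀ ℕ} (hd : d s ≠ 0) : coeff d f = 0 := by
  by_contra h
  have : s ∈ f.vars := (mem_vars_iff_mem_support s).mpr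
    ⟨d, mem_support_iff.mpr h, Finsupp.mem_support_iff.mpr hd⟩
  exact (mem_supported.mp hf) this rfl

lemma expand_isHomogeneous {ι σ : Type*} {r : ℕ} (w : ι → MvPolynomial σ ℤ)
    (f : List ι → MvPolynomial σ ℤ) (l : List ι) (hw : ∀ b, (w b).IsHomogeneous 1)
    (hf : ∀ l' : List ι, l'.length + 1 = l.length → (f l').IsHomogeneous r) :
    (expand w f l).IsHomogeneous (1 + r) := by
  induction l generalizing f with
  | nil => rw [expand_nil]; exact isHomogeneous_zero _ _ _
  | cons b l ih =>
    rw [expand_cons]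
    exact ((hw b).mul (hf l rfl)).sub (ih _ fun l' hl' => hf _ (by simpa using hl'))

lemma pfList_isHomogeneous {ι σ : Type*} (x : ι → ι → MvPolynomial σ ℤ)
    (hx : ∀ a b, (x a b).IsHomogeneous 1) (r : ℕ) (l : List ι) (hl : l.length = 2 * r) :
    (pfList x l).IsHomogeneous r := by
  induction r generalizing l with
  | zero =>
    obtain rfl := List.length_eq_zero_iff.mp hl
    rw [pfList_nil]; exact isHomogeneous_one _ _
  | succ r ih =>
    cases l with
    | nil => simp at hl
    | cons a l =>
      rw [pfList_cons, add_comm r 1]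
      refine expand_isHomogeneous _ _ _ (hx a) fun l' hl' => ih l' ?_
      simp at hl; omega

variable {n : ℕ}

lemma revPhi_isHomogeneous (i j : ℕ) : (revPhi n i j).IsHomogeneous 1 := by
  rcases lt_trichotomy i j with h | rfl | h
  · by_cases hj : j < 2 * n
    · rw [revPhi_antisymm, revPhi_eq_X h hj]; exact (isHomogeneous_X _ _).neg
    · rw [revPhi, dif_neg (by omega)]; exact isHomogeneous_zero _ _ _
  · rw [revPhi_self]; exact isHomogeneous_zero _ _ _
  · by_cases hi : i < 2 * n
    · rw [revPhi_eq_X h hi]; exact isHomogeneous_X _ _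
    · rw [revPhi, dif_neg (by omega)]; exact isHomogeneous_zero _ _ _

lemma rowForm_isHomogeneous (i : ℕ) : (rowForm n (2 * n) i).IsHomogeneous 2 := by
  refine IsHomogeneous.sum _ _ (1 + 1) fun j hj => (revPhi_isHomogeneous i j).mul ?_
  rw [revV_eq_X (Finset.mem_range.mp hj)]
  exact isHomogeneous_X _ _

lemma blockPf_isHomogeneous (r : ℕ) : (blockPf n (2 * r)).IsHomogeneous r :=
  pfList_isHomogeneous _ revPhi_isHomogeneous r _ (length_descList _)

/-- The exponent of the monomial `x_{10} x_{32} ⋯ x_{2r-1,2r-2}`. -/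
noncomputable def diagMonomial (n : ℕ) : (r : ℕ) → r ≤ n →
    ({p : Fin (2 * n) × Fin (2 * n) // p.1 < p.2} ⊕ Fin (2 * n) →₀ ℕ)
  | 0, _ => 0
  | r + 1, h => diagMonomial n r (by omega) +
      Finsupp.single (entryVar n (2 * r + 1) (2 * r) (by omega) (by omega)) 1

lemma degree_diagMonomial (r : ℕ) (h : r ≤ n) : (diagMonomial n r h).degree = r := by
  induction r with
  | zero => simp [diagMonomial]
  | succ r ih => simp [diagMonomial, map_add, ih]

lemma diagMonomial_coordVar (r : ℕ) (h : r ≤ n) (j : ℕ) (hj : j < 2 * n) :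
    diagMonomial n r h (coordVar n j hj) = 0 := by
  induction r with
  | zero => simp [diagMonomial]
  | succ r ih => rw [diagMonomial, Finsupp.add_apply, ih]; simp [coordVar, entryVar]

lemma coeff_diagMonomial_blockPf (r : ℕ) (h : r ≤ n) :
    coeff (diagMonomial n r h) (blockPf n (2 * r)) = 1 := by
  induction r with
  | zero => simp [diagMonomial, blockPf_zero]
  | succ r ih =>
    rw [diagMonomial, show 2 * (r + 1) = 2 * r + 1 + 1 by ring, blockPf, descList, pfList_cons,
      descList, expand_cons, coeff_sub, revPhi_eq_X (by omega) (by omega), mul_comm (X _) _,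
      coeff_mul_X,
      ← blockPf, ih, sub_eq_self]
    refine coeff_eq_zero_of_mem_supported (s := entryVar n (2 * r + 1) (2 * r) (by omega)
      (by omega)) (expand_mem_subalgebra _ _ _ _ (fun b hb => ?_) fun l' _ hl' => ?_) (by simp)
    · rw [mem_descList] at hb
      exact revPhi_mem_entry _ _ _ _ _ _ (by omega) (by omega)
    · refine pfList_mem_subalgebra _ _ _ fun a ha b hb => ?_
      have : ∀ c ∈ 2 * r :: l', c < 2 * r + 1 := by
        intro c hc
        rcases List.mem_cons.mp hc with rfl | hc
        · omega
        · have := mem_descList.mp (hl' hc); omega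
      have h1 := this a ha
      have h2 := this b hb
      exact revPhi_mem_entry _ _ _ _ _ _ (by omega) (by omega)

lemma coeff_rowForm_eq_zero (i : ℕ) (d)
    (hd : ∀ j (hj : j < 2 * n), d (coordVar n j hj) = 0) :
    coeff d (rowForm n (2 * n) i) = 0 := by
  classical
  rw [rowForm, coeff_sum]
  refine Finset.sum_eq_zero fun j hj => ?_
  rw [revV_eq_X (Finset.mem_range.mp hj), coeff_mul_X', if_neg]
  simpa using hd j (Finset.mem_range.mp hj)

lemma coeff_rowForm (i j : ℕ) (hj : j < 2 * n) (e) :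
    coeff (Finsupp.single (Sum.inl e) 1 + Finsupp.single (coordVar n j hj) 1)
      (rowForm n (2 * n) i) = coeff (Finsupp.single (Sum.inl e) 1) (revPhi n i j) := by
  classical
  rw [rowForm, coeff_sum, Finset.sum_eq_single j]
  · rw [revV_eq_X hj, coeff_mul_X]
  · intro k hk hkj
    rw [revV_eq_X (Finset.mem_range.mp hk), coeff_mul_X', if_neg]
    have hk' := Finset.mem_range.mp hk
    simp only [coordVar, Finsupp.mem_support_iff, Finsupp.add_apply, Finsupp.single_apply]
    simp
    omega
  · intro h; simp [hj] at h

lemma coeff_revPhi (i j a b : ℕ) (hj : j < i) (hi : i < 2 * n) (hb : b < a) (ha : a < 2 * n) :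
    coeff (Finsupp.single (entryVar n a b hb ha) 1) (revPhi n i j) =
      if i = a ∧ j = b then 1 else 0 := by
  classical
  rw [revPhi_eq_X hj hi, coeff_X]
  refine if_congr ?_ rfl rfl
  rw [Finsupp.single_left_inj one_ne_zero]
  simp only [entryVar, Sum.inl.injEq, Subtype.mk.injEq, Prod.mk.injEq, Fin.mk.injEq]
  omega

/-- The exponents used to separate the generators: `x_{i0} y_0` for `i ≠ 0`, `x_{10} y_1` for
`i = 0`, and the diagonal monomial for the Pfaffian. -/
noncomputable def testMonomial (n : ℕ) (hn : 2 ≤ n) : Option (Fin (2 * n)) →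
    ({p : Fin (2 * n) × Fin (2 * n) // p.1 < p.2} ⊕ Fin (2 * n) →₀ ℕ)
  | none => diagMonomial n n le_rfl
  | some i => if h : (i : ℕ) = 0 then
      Finsupp.single (entryVar n 1 0 (by omega) (by omega)) 1 +
        Finsupp.single (coordVar n 1 (by omega)) 1
      else Finsupp.single (entryVar n i 0 (by omega) i.2) 1 +
        Finsupp.single (coordVar n 0 (by omega)) 1

/-- The generators of the Huneke–Ulrich ideal in the reversed numbering. -/
noncomputable def revGens (n : ℕ) : Option (Fin (2 * n)) → HURing n
  | none => blockPf n (2 * n)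
  | some i => rowForm n (2 * n) i

lemma degree_testMonomial_some (hn : 2 ≤ n) (i : Fin (2 * n)) :
    (testMonomial n hn (some i)).degree = 2 := by
  by_cases h : (i : ℕ) = 0 <;> simp [testMonomial, h]

lemma coeff_revGens_of_lt (hn : 2 ≤ n) (i k d) (hd : d < testMonomial n hn k) :
    coeff d (revGens n i) = 0 := by
  have hdeg : d.degree < (testMonomial n hn k).degree := by
    obtain ⟨e, he⟩ := le_iff_exists_add.mp hd.le
    rw [he, map_add, lt_add_iff_pos_right, Nat.pos_iff_ne_zero]
    intro h
    rw [Finsupp.degree_eq_zero_iff] at h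
    rw [he, h, add_zero] at hd
    exact lt_irrefl _ hd
  cases i with
  | none =>
    refine (blockPf_isHomogeneous n).coeff_eq_zero ?_
    cases k with
    | none => rw [testMonomial, degree_diagMonomial] at hdeg; omega
    | some k => rw [degree_testMonomial_some] at hdeg; omega
  | some i =>
    cases k with
    | none =>
      refine coeff_rowForm_eq_zero i d fun j hj => ?_
      have := hd.le (coordVar n j hj)
      rw [testMonomial, diagMonomial_coordVar] at this
      omega
    | some k =>
      rw [degree_testMonomial_some] at hdeg
      exact (rowForm_isHomogeneous i).coeff_eq_zero (by omega)

lemma coeff_testMonomial_some (hn : 2 ≤ n) (i k : Fin (2 * n)) :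
    coeff (testMonomial n hn (some k)) (revGens n (some i)) =
      if i = k then (if (k : ℕ) = 0 then -1 else 1) else 0 := by
  have hi := i.2
  simp only [testMonomial, revGens]
  by_cases hk : (k : ℕ) = 0
  · rw [dif_pos hk, entryVar, coeff_rowForm]
    change coeff (Finsupp.single (entryVar n 1 0 (by omega) (by omega)) 1) _ = _
    rcases (by omega : (i : ℕ) = 0 ∨ (i : ℕ) = 1 ∨ 1 < (i : ℕ)) with h | h | h
    · rw [revPhi_antisymm, coeff_neg, h, coeff_revPhi _ _ _ _ (by omega) (by omega),
        if_pos (by simp), if_pos (Fin.ext (h.trans hk.symm)), if_pos hk]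
    · rw [h, revPhi_self, coeff_zero, if_neg (by rw [Fin.ext_iff]; omega)]
    · rw [coeff_revPhi _ _ _ _ h hi, if_neg (by omega), if_neg (by rw [Fin.ext_iff]; omega)]
  · rw [dif_neg hk, entryVar, coeff_rowForm]
    change coeff (Finsupp.single (entryVar n k 0 (by omega) k.2) 1) _ = _
    rcases Nat.eq_zero_or_pos (i : ℕ) with h | h
    · rw [h, revPhi_self, coeff_zero, if_neg (by rw [Fin.ext_iff]; omega)]
    · rw [coeff_revPhi _ _ _ _ h hi, if_neg hk]
      exact if_congr (by rw [Fin.ext_iff]; simp) rfl rfl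

lemma range_revGens : Set.range (revGens n) =
    rowForm n (2 * n) '' Set.Iio (2 * n) ∪ {blockPf n (2 * n)} := by
  ext f
  constructor
  · rintro ⟨_ | i, rfl⟩
    · exact Or.inr rfl
    · exact Or.inl ⟨i, i.2, rfl⟩
  · rintro (⟨i, hi, rfl⟩ | rfl)
    · exact ⟨some ⟨i, hi⟩, rfl⟩
    · exact ⟨none, rfl⟩

lemma huIdeal_eq_span_revGens : huIdeal n = Ideal.span (Set.range (revGens n)) := by
  rw [← blockIdeal_top, blockIdeal, rowIdeal, coordIdeal_eq_bot, bot_sup_eq, ← Ideal.span_union,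
    range_revGens]

theorem two_mul_add_one_le_card (hn : 2 ≤ n) (s : Finset (HURing n))
    (hs : Ideal.span (s : Set (HURing n)) = huIdeal n) : 2 * n + 1 ≤ s.card := by
  have := card_le_of_coeff_separating (testMonomial n hn) (revGens n)
    (coeff_revGens_of_lt hn) ?_ ?_ s (hs.trans huIdeal_eq_span_revGens)
  · simpa using this
  · rintro (_ | k)
    · rw [testMonomial, revGens, coeff_diagMonomial_blockPf]; exact isUnit_one
    · rw [coeff_testMonomial_some, if_pos rfl]
      split_ifs
      exacts [isUnit_one.neg, isUnit_one]
  · rintro (_ | i) (_ | k) h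
    · exact absurd rfl h
    · simp only [testMonomial, revGens]
      have hmem : ∀ j (hj : j < 2 * n), blockPf n (2 * n) ∈ supported ℤ {coordVar n j hj}ᶜ :=
        fun j hj => pfList_mem_subalgebra _ _ _ fun a _ b _ => revPhi_mem_coord _ _ _ _
      split_ifs
      · exact coeff_eq_zero_of_mem_supported (hmem 1 (by omega)) (by simp)
      · exact coeff_eq_zero_of_mem_supported (hmem 0 (by omega)) (by simp)
    · exact coeff_rowForm_eq_zero i _ fun j hj => diagMonomial_coordVar _ _ _ _
    · rw [coeff_testMonomial_some, if_neg fun h' => h (by rw [h'])]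

end MinimalGenerators

section RegularGenerators

open RingTheory.Sequence

/-- The ideal `I` is generated by a weakly regular sequence of length `r`. -/
def IsRegularlyGenerated {S : Type*} [CommRing S] (I : Ideal S) (r : ℕ) : Prop :=
  ∃ rs : List S, rs.length = r ∧ Ideal.ofList rs = I ∧ IsWeaklyRegular S rs

variable {S : Type*} [CommRing S] {I : Ideal S} {r : ℕ}

lemma NzdMod.isSMulRegular {a : S} (h : NzdMod a I) : IsSMulRegular (S ⧸ I) a :=
  (isSMulRegular_quotient_iff_mem_of_smul_mem I a).mpr h

lemma isRegularlyGenerated_bot : IsRegularlyGenerated (⊥ : Ideal S) 0 :=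
  ⟨[], rfl, Ideal.ofList_nil, .nil S S⟩

lemma IsRegularlyGenerated.sup_span_singleton (h : IsRegularlyGenerated I r) {a : S}
    (ha : NzdMod a I) : IsRegularlyGenerated (I ⊔ Ideal.span {a}) (r + 1) := by
  obtain ⟨rs, rfl, rfl, hrs⟩ := h
  refine ⟨rs ++ [a], by simp, by simp, (isWeaklyRegular_append_iff _ _ _).mpr ⟨hrs, ?_⟩⟩
  rw [isWeaklyRegular_singleton_iff, smul_eq_mul, Ideal.mul_top]
  exact ha.isSMulRegular

lemma mem_ofList {rs : List S} {x : S} (hx : x ∈ rs) : x ∈ Ideal.ofList rs :=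
  Ideal.subset_span hx

lemma IsRegularlyGenerated.height_le [IsNoetherianRing S] (h : IsRegularlyGenerated I r)
    {Q : Ideal S} (hQ : Q ∈ I.minimalPrimes) : Q.height ≤ r := by
  classical
  obtain ⟨rs, rfl, rfl, -⟩ := h
  have hs : Ideal.ofList rs = Ideal.span (rs.toFinset : Set S) := by
    rw [Ideal.ofList]; congr 1; ext; simp
  rw [hs] at hQ
  exact (Ideal.height_le_card_of_mem_minimalPrimes_span_finset hQ).trans
    (by exact_mod_cast rs.toFinset_card_le)

lemma length_le_height [IsNoetherianRing S] {rs : List S} (hrs : IsWeaklyRegular S rs)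
    (Q : Ideal S) [Q.IsPrime] (hmem : ∀ x ∈ rs, x ∈ Q) : (rs.length : ℕ∞) ≤ Q.height := by
  have h := ringKrullDim_add_length_eq_ringKrullDim_of_isRegular _
    (hrs.isRegular_of_isLocalization_of_mem (Localization.AtPrime Q) Q hmem)
  rw [IsLocalization.AtPrime.ringKrullDim_eq_height Q (Localization.AtPrime Q),
    List.length_map] at h
  have hne : Nontrivial (Localization.AtPrime Q ⧸
      Ideal.ofList (rs.map (algebraMap S (Localization.AtPrime Q)))) := by
    refine Ideal.Quotient.nontrivial_iff.mpr fun htop => ?_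
    have := (hrs.isRegular_of_isLocalization_of_mem (Localization.AtPrime Q) Q hmem).top_ne_smul
    simp [htop] at this
  have h0 := ringKrullDim_nonneg_of_nontrivial (R := Localization.AtPrime Q ⧸
      Ideal.ofList (rs.map (algebraMap S (Localization.AtPrime Q))))
  rw [← WithBot.coe_le_coe, ← h]
  exact le_add_of_nonneg_left h0

end RegularGenerators

section Grade

open RingTheory.Sequence

variable {n : ℕ}

lemma isRegularlyGenerated_coordIdeal (k : ℕ) (hk : k ≤ 2 * n) :
    IsRegularlyGenerated (coordIdeal n (2 * n - k)) k := by
  induction k with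
  | zero => rw [Nat.sub_zero, coordIdeal_eq_bot]; exact isRegularlyGenerated_bot
  | succ k ih =>
    have h := ih (by omega)
    rw [show 2 * n - k = 2 * n - (k + 1) + 1 by omega] at h
    rw [coordIdeal_eq_sup]
    exact h.sup_span_singleton (nzdMod_revV_coordIdeal _ (by omega))

lemma isRegularlyGenerated_rowIdeal {p q : ℕ} (hp : p < 2 * n) (hq : q ≤ p) :
    IsRegularlyGenerated (rowIdeal n (p + 1) q) (2 * n - (p + 1) + q) := by
  induction q with
  | zero =>
    rw [rowIdeal_zero, add_zero]
    have := isRegularlyGenerated_coordIdeal (n := n) (2 * n - (p + 1)) (by omega)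
    rwa [show 2 * n - (2 * n - (p + 1)) = p + 1 by omega] at this
  | succ q ih =>
    rw [rowIdeal_row_succ, ← add_assoc]
    exact (ih (by omega)).sup_span_singleton (nzdMod_rowForm_rowIdeal q p (by omega) hp)

lemma huIdeal_le_ker_constantCoeff (hn : 0 < n) :
    huIdeal n ≤ RingHom.ker (MvPolynomial.constantCoeff (R := ℤ)) := by
  rw [huIdeal_eq_span_revGens, Ideal.span_le]
  rintro _ ⟨_ | i, rfl⟩
  · exact (blockPf_isHomogeneous n).coeff_eq_zero (by simp; omega)
  · exact (rowForm_isHomogeneous (i : ℕ)).coeff_eq_zero (by simp)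

lemma huIdeal_ne_top (hn : 0 < n) : huIdeal n ≠ ⊤ := fun h => by
  have : (1 : HURing n) ∈ RingHom.ker (MvPolynomial.constantCoeff (R := ℤ)) :=
    huIdeal_le_ker_constantCoeff hn (h ▸ Submodule.mem_top)
  simp [RingHom.mem_ker] at this

/-- Minimal primes of the Huneke–Ulrich ideal are minimal over the complete intersection
generated by all but one of the row forms. -/
lemma mem_minimalPrimes_rowIdeal (hn : 0 < n) {Q : Ideal (HURing n)}
    (hQ : Q ∈ (huIdeal n).minimalPrimes) :
    Q ∈ (rowIdeal n (2 * n - 1 + 1) (2 * n - 1)).minimalPrimes := by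
  have hp : 2 * n - 1 < 2 * n := by omega
  have htop : blockIdeal n (2 * n - 1 + 1) = huIdeal n := by
    rw [show 2 * n - 1 + 1 = 2 * n by omega, blockIdeal_top]
  have hy : revV n (2 * n - 1) ∉ Q := by
    have := (nzdMod_revV_blockIdeal _ hp).isSMulRegular
    rw [htop] at this
    exact this.notMem_of_mem_minimalPrimes (by rwa [Ideal.annihilator_quotient])
  have hle : rowIdeal n (2 * n - 1 + 1) (2 * n - 1) ≤ huIdeal n := by
    rw [← htop]
    exact (rowIdeal_mono le_rfl (by omega)).trans (rowIdeal_le_blockIdeal _)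
  refine ⟨⟨hQ.1.1, hle.trans hQ.1.2⟩, fun Q' ⟨hQ', hle'⟩ hQ'Q => hQ.2 ⟨hQ', fun f hf => ?_⟩ hQ'Q⟩
  exact (hQ'.mem_or_mem (hle' ((revV_mul_mem_iff hp f).mpr (htop ▸ hf)))).resolve_left
    fun h => hy (hQ'Q h)

theorem gradeIs_huIdeal (hn : 0 < n) : gradeIs (HURing n) (huIdeal n) (2 * n - 1) := by
  have hCI := isRegularlyGenerated_rowIdeal (n := n) (p := 2 * n - 1) (by omega) le_rfl
  constructor
  · obtain ⟨rs, hlen, hI, hrs⟩ := hCI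
    have hle : Ideal.ofList rs ≤ huIdeal n := by
      rw [hI, show 2 * n - 1 + 1 = 2 * n by omega, ← blockIdeal_top]
      exact (rowIdeal_mono le_rfl (by omega)).trans (rowIdeal_le_blockIdeal _)
    refine ⟨rs, by omega, fun x hx => hle (mem_ofList hx), hrs, fun h => huIdeal_ne_top hn ?_⟩
    rw [smul_eq_mul, Ideal.mul_top] at h
    exact top_le_iff.mp (h ▸ hle)
  · rintro ⟨rs, hlen, hmem, hrs⟩
    obtain ⟨Q, hQ⟩ := Ideal.nonempty_minimalPrimes (huIdeal_ne_top hn)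
    have := hQ.1.1
    have h1 := hCI.height_le (mem_minimalPrimes_rowIdeal hn hQ)
    have h2 := length_le_height hrs.toIsWeaklyRegular Q fun x hx => hQ.1.2 (hmem x hx)
    have := h2.trans h1
    rw [Nat.cast_le] at this
    omega

end Grade

section ExtLength

open CategoryTheory Abelian RingTheory.Sequence

universe u

variable {Λ : Type u} [CommRing Λ]

section ExactLength

variable {A B C D E : Type*} [AddCommGroup A] [Module Λ A] [AddCommGroup B] [Module Λ B]
  [AddCommGroup C] [Module Λ C] [AddCommGroup D] [Module Λ D] [AddCommGroup E] [Module Λ E]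

theorem Module.length_eq_ker_add_range (g : B →ₗ[Λ] C) :
    Module.length Λ B = Module.length Λ (LinearMap.ker g) + Module.length Λ (LinearMap.range g) :=
  Module.length_eq_add_of_exact (LinearMap.ker g).subtype g.rangeRestrict
    (Submodule.subtype_injective _) g.surjective_rangeRestrict (by
      intro x; simp [← LinearMap.mem_ker])

theorem Module.length_le_add_of_exact (f : A →ₗ[Λ] B) (g : B →ₗ[Λ] C)
    (h : ∀ x, g x = 0 → ∃ y, f y = x) :
    Module.length Λ B ≤ Module.length Λ A + Module.length Λ C := by
  rw [Module.length_eq_ker_add_range g]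
  refine add_le_add ?_ (Module.length_le_of_injective (LinearMap.range g).subtype
    (Submodule.subtype_injective _))
  refine le_trans (Module.length_le_of_injective
    (Submodule.inclusion (?_ : LinearMap.ker g ≤ LinearMap.range f))
    (Submodule.inclusion_injective _)) (Module.length_le_of_surjective f.rangeRestrict
      f.surjective_rangeRestrict)
  exact fun x hx => h x hx

theorem Module.length_add_le_of_exact (f : A →ₗ[Λ] B) (g : B →ₗ[Λ] C) (h : C →ₗ[Λ] D)
    (hfg : ∀ x, g x = 0 → ∃ y, f y = x) (hgh : ∀ x, h (g x) = 0)
    (hh : Function.Surjective h) :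
    Module.length Λ B + Module.length Λ D ≤ Module.length Λ A + Module.length Λ C := by
  have h1 : Module.length Λ B ≤ Module.length Λ A + Module.length Λ (LinearMap.range g) := by
    refine Module.length_le_add_of_exact f g.rangeRestrict fun x hx => hfg x ?_
    simpa using congrArg Subtype.val hx
  have h2 : Module.length Λ (LinearMap.range g) + Module.length Λ D ≤ Module.length Λ C := by
    have hD := Module.length_eq_ker_add_range h
    rw [LinearMap.range_eq_top.mpr hh, Module.length_top] at hD
    rw [hD]
    refine add_le_add (Module.length_le_of_injective (Submodule.inclusion
      (?_ : LinearMap.range g ≤ LinearMap.ker h)) (Submodule.inclusion_injective _)) le_rfl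
    rintro _ ⟨x, rfl⟩
    exact hgh x
  calc _ ≤ Module.length Λ A + Module.length Λ (LinearMap.range g) + Module.length Λ D := by gcongr
    _ ≤ _ := by rw [add_assoc]; gcongr

end ExactLength

variable (Λ) in
/-- The length of `Ext^i(N, M)`. -/
noncomputable def extLength (N M : Type u) [AddCommGroup N] [Module Λ N] [AddCommGroup M]
    [Module Λ M] (i : ℕ) : ℕ∞ :=
  Module.length Λ (Ext (ModuleCat.of Λ N) (ModuleCat.of Λ M) i)

variable {A B C X Y : Type u} [AddCommGroup A] [Module Λ A] [AddCommGroup B] [Module Λ B]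
  [AddCommGroup C] [Module Λ C] [AddCommGroup X] [Module Λ X] [AddCommGroup Y] [Module Λ Y]

theorem extLength_congr_left_le (e : X ≃ₗ[Λ] Y) (M : Type u) [AddCommGroup M] [Module Λ M]
    (i : ℕ) : extLength Λ X M i ≤ extLength Λ Y M i := by
  refine Module.length_le_of_surjective ((Ext.mk₀ (ModuleCat.ofHom (e : X →ₗ[Λ] Y))).precompOfLinear
    Λ (ModuleCat.of Λ M) (zero_add i)) fun x =>
    ⟨(Ext.mk₀ (ModuleCat.ofHom (e.symm : Y →ₗ[Λ] X))).comp x (zero_add i), ?_⟩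
  have : ModuleCat.ofHom (e : X →ₗ[Λ] Y) ≫ ModuleCat.ofHom (e.symm : Y →ₗ[Λ] X) =
      𝟙 (ModuleCat.of Λ X) := by
    ext x; simp
  simp [this]

theorem extLength_congr_left (e : X ≃ₗ[Λ] Y) (M : Type u) [AddCommGroup M] [Module Λ M]
    (i : ℕ) : extLength Λ X M i = extLength Λ Y M i :=
  le_antisymm (extLength_congr_left_le e M i) (extLength_congr_left_le e.symm M i)

theorem extLength_congr_right_le (e : X ≃ₗ[Λ] Y) (N : Type u) [AddCommGroup N] [Module Λ N]
    (i : ℕ) : extLength Λ N X i ≤ extLength Λ N Y i := by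
  refine Module.length_le_of_surjective
    ((Ext.mk₀ (ModuleCat.ofHom (e.symm : Y →ₗ[Λ] X))).postcompOfLinear
    Λ (ModuleCat.of Λ N) (add_zero i)) fun x =>
    ⟨x.comp (Ext.mk₀ (ModuleCat.ofHom (e : X →ₗ[Λ] Y))) (add_zero i), ?_⟩
  have : ModuleCat.ofHom (e : X →ₗ[Λ] Y) ≫ ModuleCat.ofHom (e.symm : Y →ₗ[Λ] X) =
      𝟙 (ModuleCat.of Λ X) := by
    ext x; simp
  simp [this]

theorem extLength_congr_right (e : X ≃ₗ[Λ] Y) (N : Type u) [AddCommGroup N] [Module Λ N]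
    (i : ℕ) : extLength Λ N X i = extLength Λ N Y i :=
  le_antisymm (extLength_congr_right_le e N i) (extLength_congr_right_le e.symm N i)

theorem extLength_zero (N M : Type u) [AddCommGroup N] [Module Λ N] [AddCommGroup M]
    [Module Λ M] : extLength Λ N M 0 = Module.length Λ (N →ₗ[Λ] M) :=
  LinearEquiv.length_eq (Ext.linearEquiv₀.trans ModuleCat.homLinearEquiv)

theorem extLength_of_subsingleton_left (N M : Type u) [AddCommGroup N] [Module Λ N]
    [AddCommGroup M] [Module Λ M] [Subsingleton N] (i : ℕ) : extLength Λ N M i = 0 := by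
  refine Module.length_eq_zero_iff.mpr ⟨fun x y => ?_⟩
  have h : 𝟙 (ModuleCat.of Λ N) = 0 := by ext x; exact Subsingleton.elim (α := N) _ _
  rw [← Ext.mk₀_id_comp x, ← Ext.mk₀_id_comp y, h]
  simp

theorem extLength_of_subsingleton_right (N M : Type u) [AddCommGroup N] [Module Λ N]
    [AddCommGroup M] [Module Λ M] [Subsingleton M] (i : ℕ) : extLength Λ N M i = 0 := by
  refine Module.length_eq_zero_iff.mpr ⟨fun x y => ?_⟩
  have h : 𝟙 (ModuleCat.of Λ M) = 0 := by ext x; exact Subsingleton.elim (α := M) _ _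
  rw [← Ext.comp_mk₀_id x, ← Ext.comp_mk₀_id y, h]
  simp

theorem extLength_succ_of_projective (P M : Type u) [AddCommGroup P] [Module Λ P]
    [AddCommGroup M] [Module Λ M] [Module.Projective Λ P] (i : ℕ) :
    extLength Λ P M (i + 1) = 0 := by
  have : Projective (ModuleCat.of Λ P) := inferInstance
  exact Module.length_eq_zero_iff.mpr ⟨fun x y => by
    rw [Ext.eq_zero_of_projective x, Ext.eq_zero_of_projective y]⟩

theorem extLength_zero_le_of_injective (f : A →ₗ[Λ] B) (hf : Function.Injective f) (X : Type u)
    [AddCommGroup X] [Module Λ X] : extLength Λ X A 0 ≤ extLength Λ X B 0 := by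
  rw [extLength_zero, extLength_zero]
  exact Module.length_le_of_injective (LinearMap.llcomp Λ X A B f)
    fun a b hab => LinearMap.ext fun x => hf (LinearMap.congr_fun hab x)

section ShortExact

variable (f : A →ₗ[Λ] B) (g : B →ₗ[Λ] C) (hf : Function.Injective f)
  (hg : Function.Surjective g) (hfg : Function.Exact f g)
include hf hg hfg

theorem exists_shortExact : ∃ w : ModuleCat.ofHom f ≫ ModuleCat.ofHom g = 0,
    (ShortComplex.mk (ModuleCat.ofHom f) (ModuleCat.ofHom g) w).ShortExact := by
  refine ⟨by ext x; exact hfg.apply_apply_eq_zero x, ?_⟩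
  refine { exact := ?_, mono_f := ?_, epi_g := ?_ }
  · exact ModuleCat.shortComplex_exact _ hfg
  · exact (ModuleCat.mono_iff_injective _).mpr hf
  · exact (ModuleCat.epi_iff_surjective _).mpr hg

theorem extLength_mid_le (X : Type u) [AddCommGroup X] [Module Λ X] (i : ℕ) :
    extLength Λ X B i ≤ extLength Λ X A i + extLength Λ X C i := by
  obtain ⟨w, hS⟩ := exists_shortExact f g hf hg hfg
  exact Module.length_le_add_of_exact
    ((Ext.mk₀ (ModuleCat.ofHom f)).postcompOfLinear Λ (ModuleCat.of Λ X) (add_zero i))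
    ((Ext.mk₀ (ModuleCat.ofHom g)).postcompOfLinear Λ (ModuleCat.of Λ X) (add_zero i))
    fun x hx => Ext.covariant_sequence_exact₂ (ModuleCat.of Λ X) hS x hx

theorem extLength_left_le (X : Type u) [AddCommGroup X] [Module Λ X] (i : ℕ) :
    extLength Λ X A (i + 1) ≤ extLength Λ X C i + extLength Λ X B (i + 1) := by
  obtain ⟨w, hS⟩ := exists_shortExact f g hf hg hfg
  exact Module.length_le_add_of_exact
    (hS.extClass.postcompOfLinear Λ (ModuleCat.of Λ X) rfl)
    ((Ext.mk₀ (ModuleCat.ofHom f)).postcompOfLinear Λ (ModuleCat.of Λ X) (add_zero (i + 1)))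
    fun x hx => Ext.covariant_sequence_exact₁ (ModuleCat.of Λ X) hS x hx rfl

theorem extLength_right_le (X : Type u) [AddCommGroup X] [Module Λ X] (i : ℕ) :
    extLength Λ X C i ≤ extLength Λ X B i + extLength Λ X A (i + 1) := by
  obtain ⟨w, hS⟩ := exists_shortExact f g hf hg hfg
  exact Module.length_le_add_of_exact
    ((Ext.mk₀ (ModuleCat.ofHom g)).postcompOfLinear Λ (ModuleCat.of Λ X) (add_zero i))
    (hS.extClass.postcompOfLinear Λ (ModuleCat.of Λ X) rfl)
    fun x hx => Ext.covariant_sequence_exact₃ (ModuleCat.of Λ X) hS x rfl hx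

theorem extLength_mid_le_left (M : Type u) [AddCommGroup M] [Module Λ M] (i : ℕ) :
    extLength Λ B M i ≤ extLength Λ C M i + extLength Λ A M i := by
  obtain ⟨w, hS⟩ := exists_shortExact f g hf hg hfg
  exact Module.length_le_add_of_exact
    ((Ext.mk₀ (ModuleCat.ofHom g)).precompOfLinear Λ (ModuleCat.of Λ M) (zero_add i))
    ((Ext.mk₀ (ModuleCat.ofHom f)).precompOfLinear Λ (ModuleCat.of Λ M) (zero_add i))
    fun x hx => Ext.contravariant_sequence_exact₂ hS (ModuleCat.of Λ M) x hx

theorem extLength_quot_succ_le (M : Type u) [AddCommGroup M] [Module Λ M] (i : ℕ) :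
    extLength Λ C M (i + 1) ≤ extLength Λ A M i + extLength Λ B M (i + 1) := by
  obtain ⟨w, hS⟩ := exists_shortExact f g hf hg hfg
  exact Module.length_le_add_of_exact
    (hS.extClass.precompOfLinear Λ (ModuleCat.of Λ M) (Nat.add_comm 1 i))
    ((Ext.mk₀ (ModuleCat.ofHom g)).precompOfLinear Λ (ModuleCat.of Λ M) (zero_add (i + 1)))
    fun x hx => Ext.contravariant_sequence_exact₃ hS (ModuleCat.of Λ M) x hx (Nat.add_comm 1 i)

theorem extLength_mid_add_quot_le (M : Type u) [AddCommGroup M] [Module Λ M] (i : ℕ)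
    (h0 : extLength Λ B M (i + 1) = 0) :
    extLength Λ B M i + extLength Λ C M (i + 1) ≤ extLength Λ C M i + extLength Λ A M i := by
  obtain ⟨w, hS⟩ := exists_shortExact f g hf hg hfg
  have := Module.length_eq_zero_iff.mp h0
  refine Module.length_add_le_of_exact
    ((Ext.mk₀ (ModuleCat.ofHom g)).precompOfLinear Λ (ModuleCat.of Λ M) (zero_add i))
    ((Ext.mk₀ (ModuleCat.ofHom f)).precompOfLinear Λ (ModuleCat.of Λ M) (zero_add i))
    (hS.extClass.precompOfLinear Λ (ModuleCat.of Λ M) (Nat.add_comm 1 i))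
    (fun x hx => Ext.contravariant_sequence_exact₂ hS (ModuleCat.of Λ M) x hx) (fun x => ?_)
    (fun x => Ext.contravariant_sequence_exact₃ hS (ModuleCat.of Λ M) x (Subsingleton.elim _ _)
      (Nat.add_comm 1 i))
  exact ShortComplex.ShortExact.extClass_comp_assoc hS x (h := Nat.add_comm 1 i)

end ShortExact

end ExtLength

section ExtRegular

open CategoryTheory Abelian RingTheory.Sequence Pointwise

universe u

variable {Λ : Type u} [CommRing Λ] {M N : Type u} [AddCommGroup M] [Module Λ M]
  [AddCommGroup N] [Module Λ N]

theorem IsSMulRegular.extLength_quotSMulTop_le {x : Λ} (hx : IsSMulRegular M x) (i : ℕ) :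
    extLength Λ N (QuotSMulTop x M) i ≤ extLength Λ N M i + extLength Λ N M (i + 1) :=
  extLength_right_le (LinearMap.lsmul Λ M x) (x • (⊤ : Submodule Λ M)).mkQ hx
    (Submodule.mkQ_surjective _) (LinearMap.exact_lsmul_mkQ_smul_top M x) N i

theorem IsSMulRegular.extLength_quotSMulTop_left_le {x : Λ} (hx : IsSMulRegular N x) (i : ℕ) :
    extLength Λ (QuotSMulTop x N) M (i + 1) ≤ extLength Λ N M i + extLength Λ N M (i + 1) :=
  extLength_quot_succ_le (LinearMap.lsmul Λ N x) (x • (⊤ : Submodule Λ N)).mkQ hx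
    (Submodule.mkQ_surjective _) (LinearMap.exact_lsmul_mkQ_smul_top N x) M i

theorem IsSMulRegular.extLength_zero_eq_zero {x : Λ} (hx : IsSMulRegular M x)
    (hN : x ∈ Module.annihilator Λ N) : extLength Λ N M 0 = 0 := by
  rw [extLength_zero, Module.length_eq_zero_iff]
  have key : ∀ φ : N →ₗ[Λ] M, φ = 0 := fun φ => LinearMap.ext fun y => hx <| by
    simp [← map_smul, Module.mem_annihilator.mp hN y]
  exact ⟨fun φ ψ => by rw [key φ, key ψ]⟩

theorem IsSMulRegular.extLength_succ_le {x : Λ} (hx : IsSMulRegular M x)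
    (hN : x ∈ Module.annihilator Λ N) (i : ℕ) :
    extLength Λ N M (i + 1) ≤ extLength Λ N (QuotSMulTop x M) i := by
  have hS := IsSMulRegular.smulShortComplex_shortExact (M := ModuleCat.of Λ M) hx
  refine Module.length_le_of_surjective
    (hS.extClass.postcompOfLinear Λ (ModuleCat.of Λ N) rfl) fun y =>
    Ext.covariant_sequence_exact₁ (ModuleCat.of Λ N) hS y ?_ rfl
  exact congrArg (fun φ => φ.hom y) (Ext.postcomp_smul_id_eq_zero_of_mem_annihilator
    (M := ModuleCat.of Λ M) (N := ModuleCat.of Λ N) hN (i + 1))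

theorem RingTheory.Sequence.IsWeaklyRegular.extLength_le_quotient {rs : List Λ}
    (hrs : IsWeaklyRegular M rs) (hN : ∀ x ∈ rs, x ∈ Module.annihilator Λ N) {j : ℕ}
    (h0 : ∀ i < j, extLength Λ N (M ⧸ (Ideal.ofList rs • ⊤ : Submodule Λ M)) i = 0) :
    (∀ i < j + rs.length, extLength Λ N M i = 0) ∧
      extLength Λ N M (j + rs.length) ≤
        extLength Λ N (M ⧸ (Ideal.ofList rs • ⊤ : Submodule Λ M)) j := by
  induction rs generalizing M with
  | nil =>
    have e := Submodule.quotEquivOfEqBot (Ideal.ofList ([] : List Λ) • (⊤ : Submodule Λ M))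
      (by simp)
    simp only [extLength_congr_right e] at h0 ⊢
    exact ⟨h0, le_rfl⟩
  | cons x rs ih =>
    obtain ⟨hx, hrs⟩ := (isWeaklyRegular_cons_iff _ _ _).mp hrs
    have e := Submodule.quotOfListConsSMulTopEquivQuotSMulTopInner M x rs
    simp only [extLength_congr_right e] at h0 ⊢
    obtain ⟨h1, h2⟩ := ih hrs (fun y hy => hN y (List.mem_cons_of_mem _ hy)) h0
    have hxN := hN x List.mem_cons_self
    refine ⟨fun i hi => ?_, (hx.extLength_succ_le hxN (j + rs.length)).trans h2⟩
    cases i with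
    | zero => exact hx.extLength_zero_eq_zero hxN
    | succ i =>
      refine le_antisymm ((hx.extLength_succ_le hxN i).trans (h1 i ?_).le) bot_le
      rw [List.length_cons] at hi
      omega

theorem RingTheory.Sequence.IsWeaklyRegular.extLength_quotient_le {rs : List Λ}
    (hrs : IsWeaklyRegular M rs) {j : ℕ}
    (h0 : ∀ i < j + rs.length, extLength Λ N M i = 0) :
    (∀ i < j, extLength Λ N (M ⧸ (Ideal.ofList rs • ⊤ : Submodule Λ M)) i = 0) ∧
      extLength Λ N (M ⧸ (Ideal.ofList rs • ⊤ : Submodule Λ M)) j ≤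
        extLength Λ N M (j + rs.length) := by
  induction rs generalizing M with
  | nil =>
    have e := Submodule.quotEquivOfEqBot (Ideal.ofList ([] : List Λ) • (⊤ : Submodule Λ M))
      (by simp)
    simp only [extLength_congr_right e] at h0 ⊢
    exact ⟨h0, le_rfl⟩
  | cons x rs ih =>
    obtain ⟨hx, hrs⟩ := (isWeaklyRegular_cons_iff _ _ _).mp hrs
    have e := Submodule.quotOfListConsSMulTopEquivQuotSMulTopInner M x rs
    simp only [extLength_congr_right e]
    rw [List.length_cons] at h0 ⊢
    obtain ⟨h1, h2⟩ := ih hrs fun i hi => by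
      have := hx.extLength_quotSMulTop_le (N := N) i
      rwa [h0 i (by omega), h0 (i + 1) (by omega), add_zero, le_zero_iff] at this
    refine ⟨h1, h2.trans ?_⟩
    have := hx.extLength_quotSMulTop_le (N := N) (j + rs.length)
    rwa [h0 (j + rs.length) (by omega), zero_add] at this

theorem RingTheory.Sequence.IsWeaklyRegular.extLength_left_eq_zero {rs : List Λ}
    (hrs : IsWeaklyRegular N rs) {c : ℕ} (h0 : ∀ j, c < j → extLength Λ N M j = 0) :
    ∀ j, c + rs.length < j →
      extLength Λ (N ⧸ (Ideal.ofList rs • ⊤ : Submodule Λ N)) M j = 0 := by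
  induction rs generalizing N c with
  | nil =>
    have e := Submodule.quotEquivOfEqBot (Ideal.ofList ([] : List Λ) • (⊤ : Submodule Λ N))
      (by simp)
    exact fun j hj => (extLength_congr_left e M j).trans (h0 j hj)
  | cons x rs ih =>
    obtain ⟨hx, hrs⟩ := (isWeaklyRegular_cons_iff _ _ _).mp hrs
    have e := Submodule.quotOfListConsSMulTopEquivQuotSMulTopInner N x rs
    simp only [extLength_congr_left e, List.length_cons]
    refine fun j hj => ih (c := c + 1) hrs (fun i hi => ?_) j (by omega)
    obtain ⟨i, rfl⟩ : ∃ i', i = i' + 1 := ⟨i - 1, by omega⟩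
    have := hx.extLength_quotSMulTop_left_le (M := M) i
    rwa [h0 i (by omega), h0 (i + 1) (by omega), add_zero, le_zero_iff] at this

open IsLocalRing in
theorem IsFiniteLength.extLength_le [IsLocalRing Λ] (hN : IsFiniteLength Λ N) (i : ℕ) :
    extLength Λ N M i ≤ Module.length Λ N * extLength Λ (ResidueField Λ) M i := by
  induction hN with
  | of_subsingleton => rw [extLength_of_subsingleton_left]; exact bot_le
  | @of_simple_quotient N' _ _ N'' hs _ ih =>
    refine (extLength_mid_le_left N''.subtype N''.mkQ N''.injective_subtype
      N''.mkQ_surjective (LinearMap.exact_subtype_mkQ N'') M i).trans ?_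
    obtain ⟨I, hI, ⟨e⟩⟩ := isSimpleModule_iff_quot_maximal.mp hs
    obtain rfl := eq_maximalIdeal hI
    have e' : (N' ⧸ N'') ≃ₗ[Λ] ResidueField Λ := e
    rw [extLength_congr_left e', Module.length_eq_add_of_exact N''.subtype N''.mkQ
      N''.injective_subtype N''.mkQ_surjective (LinearMap.exact_subtype_mkQ N''),
      Module.length_eq_one_iff.mpr hs, add_mul, one_mul, add_comm]
    gcongr

end ExtRegular

section ExtComparison

open CategoryTheory Abelian CochainComplex.HomComplex

theorem CategoryTheory.ProjectiveResolution.extMk_zero_eq_zero_iff {C : Type*} [Category* C]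
    [Abelian C] [HasExt C] {X Y : C} (P : ProjectiveResolution X) (f : P.complex.X 0 ⟶ Y) (m : ℕ)
    (hm : 0 + 1 = m) (hf : P.complex.d m 0 ≫ f = 0) : P.extMk f m hm hf = 0 ↔ f = 0 := by
  simp only [← P.extEquivCohomologyClass.apply_eq_iff_eq,
    extEquivCohomologyClass_extMk, extEquivCohomologyClass_zero,
    CohomologyClass.mk_eq_zero_iff]
  rw [Cocycle.toSingleMk_mem_coboundaries_iff _ _ _ _ _ 1 (by simp)]
  have hz : Limits.IsZero (P.cochainComplex.X 1) :=
    P.cochainComplex.isZero_of_isStrictlyLE 0 1 (by simp)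
  constructor
  · rintro ⟨g, hg⟩
    rw [hz.eq_of_src g 0, Limits.comp_zero] at hg
    rw [← cancel_epi (P.cochainComplexXIso (-(0 : ℕ)) 0 rfl).hom, ← hg, Limits.comp_zero]
  · rintro rfl
    exact ⟨0, by simp⟩

variable {Λ : Type} [CommRing Λ]

/-- The class in `Ext` of a cocycle on a projective resolution, as a linear map. -/
noncomputable def linearMapExtMk {X : ModuleCat.{0} Λ} (P : ProjectiveResolution X)
    (Y : ModuleCat.{0} Λ) (n : ℕ) :
    LinearMap.ker ((P.complex.linearYonedaObj Λ Y).sc n).g.hom →ₗ[Λ] Ext X Y n where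
  toFun f := P.extMk f.1 ((ComplexShape.up ℕ).next n) (by simp) f.2
  map_add' f g := (P.add_extMk _ _ _ _ _ _).symm
  map_smul' r f := by
    have := P.extMk_comp_mk₀ f.1 ((ComplexShape.up ℕ).next n) (by simp) f.2 (r • 𝟙 Y)
    rw [RingHom.id_apply, Ext.smul_eq_comp_mk₀, this]
    congr 1

theorem linearMapExtMk_surjective {X : ModuleCat.{0} Λ} (P : ProjectiveResolution X)
    (Y : ModuleCat.{0} Λ) (n : ℕ) : Function.Surjective (linearMapExtMk P Y n) := fun α => by
  obtain ⟨f, hf, h⟩ := P.extMk_surjective α ((ComplexShape.up ℕ).next n) (by simp)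
  exact ⟨⟨f, hf⟩, h⟩

theorem ker_linearMapExtMk {X : ModuleCat.{0} Λ} (P : ProjectiveResolution X)
    (Y : ModuleCat.{0} Λ) (n : ℕ) : LinearMap.ker (linearMapExtMk P Y n) =
      LinearMap.range ((P.complex.linearYonedaObj Λ Y).sc n).moduleCatToCycles := by
  ext f
  rw [LinearMap.mem_ker, LinearMap.mem_range]
  cases n with
  | zero =>
    refine (P.extMk_zero_eq_zero_iff f.1 _ (by simp) f.2).trans ⟨fun h => ⟨0, ?_⟩, ?_⟩
    · rw [map_zero]
      exact Subtype.ext h.symm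
    · rintro ⟨g, rfl⟩
      have : ((P.complex.linearYonedaObj Λ Y).sc 0).f = 0 :=
        (P.complex.linearYonedaObj Λ Y).shape _ _ (by simp)
      exact congrArg (fun φ => φ.hom g) this
  | succ n =>
    have hp : (ComplexShape.up ℕ).prev (n + 1) + 1 = n + 1 := by simp
    refine (P.extMk_eq_zero_iff f.1 _ (by simp) f.2 ((ComplexShape.up ℕ).prev (n + 1)) hp).trans
      ⟨fun ⟨g, hg⟩ => ⟨g, Subtype.ext hg⟩, fun ⟨g, hg⟩ => ⟨g, congrArg Subtype.val hg⟩⟩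

/-- The derived-functor `Ext` and the derived-category `Ext` agree, linearly. -/
theorem nonempty_extMod_linearEquiv (M N : Type) [AddCommGroup M] [Module Λ M] [AddCommGroup N]
    [Module Λ N] (n : ℕ) :
    Nonempty (ExtMod Λ M N n ≃ₗ[Λ] Ext (ModuleCat.of Λ M) (ModuleCat.of Λ N) n) := by
  let P := projectiveResolution (ModuleCat.of Λ M)
  let K := P.complex.linearYonedaObj Λ (ModuleCat.of Λ N)
  exact ⟨(P.isoExt n (ModuleCat.of Λ N) ≪≫ (K.sc n).moduleCatHomologyIso).toLinearEquiv ≪≫ₗ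
    Submodule.quotEquivOfEq _ _ (ker_linearMapExtMk P _ n).symm ≪≫ₗ
    (linearMapExtMk P _ n).quotKerEquivOfSurjective (linearMapExtMk_surjective P _ n)⟩

end ExtComparison

section GorensteinCriterion

open CategoryTheory Abelian RingTheory.Sequence IsLocalRing

universe u

theorem mem_annihilator_residueField {Λ : Type*} [CommRing Λ] [IsLocalRing Λ] {x : Λ}
    (hx : x ∈ maximalIdeal Λ) : x ∈ Module.annihilator Λ (ResidueField Λ) :=
  Module.mem_annihilator.mpr fun y => by
    rw [Algebra.smul_def, ResidueField.algebraMap_eq, (residue_eq_zero_iff x).mpr hx, zero_mul]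

theorem length_quotient_le_length_end {Λ : Type*} [CommRing Λ] (I : Submodule Λ Λ) :
    Module.length Λ (Λ ⧸ I) ≤ Module.length Λ ((Λ ⧸ I) →ₗ[Λ] (Λ ⧸ I)) := by
  have hker : LinearMap.ker (LinearMap.lsmul Λ (Λ ⧸ I)) = I := by
    ext x
    rw [LinearMap.mem_ker]
    constructor
    · intro h
      have := LinearMap.congr_fun h (I.mkQ 1)
      rw [LinearMap.lsmul_apply, ← map_smul, smul_eq_mul, mul_one] at this
      exact (Submodule.Quotient.mk_eq_zero I).mp this
    · intro h
      refine LinearMap.ext fun y => ?_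
      obtain ⟨y, rfl⟩ := I.mkQ_surjective y
      rw [LinearMap.lsmul_apply, ← map_smul, smul_eq_mul, mul_comm]
      exact (Submodule.Quotient.mk_eq_zero I).mpr (I.smul_mem y h)
  exact Module.length_le_of_injective (I.liftQ (LinearMap.lsmul Λ (Λ ⧸ I)) hker.ge)
    (LinearMap.ker_eq_bot.mp (Submodule.ker_liftQ_eq_bot' _ _ hker.symm))

theorem nonempty_linearEquiv_residueField {Λ : Type*} [CommRing Λ] [IsLocalRing Λ] {M : Type*}
    [AddCommGroup M] [Module Λ M] (h : Module.length Λ M = 1) :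
    Nonempty (M ≃ₗ[Λ] ResidueField Λ) := by
  obtain ⟨I, hI, ⟨e⟩⟩ := isSimpleModule_iff_quot_maximal.mp (Module.length_eq_one_iff.mp h)
  obtain rfl := eq_maximalIdeal hI
  exact ⟨e⟩

theorem exists_extLength_residueField {Λ : Type u} [CommRing Λ] [IsLocalRing Λ] {rs : List Λ}
    (hrs : IsWeaklyRegular Λ rs) (hmem : ∀ x ∈ rs, x ∈ maximalIdeal Λ)
    (hfin : IsFiniteLength Λ (Λ ⧸ (Ideal.ofList rs • ⊤ : Submodule Λ Λ)))
    (hsoc : extLength Λ (ResidueField Λ) (Λ ⧸ (Ideal.ofList rs • ⊤ : Submodule Λ Λ)) 0 ≤ 1) :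
    (∀ i ≠ rs.length, extLength Λ (ResidueField Λ) Λ i = 0) ∧
      extLength Λ (ResidueField Λ) Λ rs.length = 1 := by
  obtain ⟨hlow, hd⟩ := hrs.extLength_le_quotient (N := ResidueField Λ) (j := 0)
    (fun x hx => mem_annihilator_residueField (hmem x hx)) (by simp)
  rw [zero_add] at hlow hd
  replace hd := hd.trans hsoc
  set I : Submodule Λ Λ := Ideal.ofList rs • ⊤ with hI
  have hIm : I ≤ maximalIdeal Λ := by
    rw [hI, smul_eq_mul, Ideal.mul_top]
    exact Ideal.span_le.mpr hmem
  have hlen : Module.length Λ (Λ ⧸ I) ≠ ⊤ := Module.length_ne_top_iff.mpr hfin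
  have hBd : Module.length Λ (Λ ⧸ I) ≤ extLength Λ (Λ ⧸ I) Λ rs.length := by
    have := (hrs.extLength_quotient_le (N := Λ ⧸ I) (j := 0) fun i hi => by
      rw [zero_add] at hi
      have := hfin.extLength_le (M := Λ) i
      rwa [hlow i hi, mul_zero, le_zero_iff] at this).2
    rw [zero_add, ← hI, extLength_zero] at this
    exact (length_quotient_le_length_end I).trans this
  have hB0 : Module.length Λ (Λ ⧸ I) ≠ 0 := by
    rw [Ne, Module.length_eq_zero_iff, Submodule.Quotient.subsingleton_iff]
    intro htop
    exact (maximalIdeal.isMaximal Λ).ne_top (top_le_iff.mp (htop ▸ hIm))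
  have hd1 : extLength Λ (ResidueField Λ) Λ rs.length = 1 := by
    refine le_antisymm hd (Order.one_le_iff_ne_zero.mpr fun h0 => hB0 ?_)
    have := hBd.trans (hfin.extLength_le (M := Λ) rs.length)
    rwa [h0, mul_zero, le_zero_iff] at this
  have hBhigh : ∀ j, rs.length < j → extLength Λ (Λ ⧸ I) Λ j = 0 := by
    have := hrs.extLength_left_eq_zero (M := Λ) (c := 0) fun j hj => by
      obtain ⟨j, rfl⟩ : ∃ j', j = j' + 1 := ⟨j - 1, by omega⟩
      exact extLength_succ_of_projective Λ Λ j
    simpa only [zero_add] using this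
  let π : (Λ ⧸ I) →ₗ[Λ] ResidueField Λ := I.liftQ (Algebra.linearMap Λ (ResidueField Λ))
    fun x hx => (residue_eq_zero_iff x).mpr (hIm hx)
  have hπ : Function.Surjective π := fun y => by
    obtain ⟨x, rfl⟩ := residue_surjective y
    exact ⟨I.mkQ x, rfl⟩
  let K := LinearMap.ker π
  have hex : Function.Exact K.subtype π := LinearMap.exact_subtype_ker_map π
  have hK := Module.length_eq_add_of_exact K.subtype π K.injective_subtype hπ hex
  have hk1 : Module.length Λ (ResidueField Λ) = 1 := by
    have e : ResidueField Λ ≃ₗ[Λ] (Λ ⧸ maximalIdeal Λ) := LinearEquiv.refl _ _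
    rw [Module.length_eq_one_iff]
    exact isSimpleModule_iff_quot_maximal.mpr ⟨_, maximalIdeal.isMaximal Λ, ⟨e⟩⟩
  rw [hk1] at hK
  have hKfin : IsFiniteLength Λ K := hfin.of_injective K.injective_subtype
  have hzero : extLength Λ (ResidueField Λ) Λ (rs.length + 1) = 0 := by
    have h1 := extLength_mid_add_quot_le K.subtype π K.injective_subtype hπ hex Λ rs.length
      (hBhigh _ (Nat.lt_succ_self _))
    have h2 : Module.length Λ (Λ ⧸ I) + extLength Λ (ResidueField Λ) Λ (rs.length + 1) ≤
        Module.length Λ (Λ ⧸ I) + 0 := by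
      refine (add_le_add hBd le_rfl).trans (h1.trans ?_)
      rw [hd1, add_zero, hK, add_comm]
      refine add_le_add ((hKfin.extLength_le (M := Λ) rs.length).trans ?_) le_rfl
      rw [hd1, mul_one]
    exact le_zero_iff.mp ((ENat.add_le_add_iff_left hlen).mp h2)
  have hhigh : ∀ j, extLength Λ (ResidueField Λ) Λ (rs.length + 1 + j) = 0 := by
    intro j
    induction j with
    | zero => exact hzero
    | succ j ih =>
      have h1 := extLength_quot_succ_le K.subtype π K.injective_subtype hπ hex Λ
        (rs.length + 1 + j)
      have h2 := hKfin.extLength_le (M := Λ) (rs.length + 1 + j)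
      rw [ih, mul_zero] at h2
      rw [le_zero_iff.mp h2, hBhigh _ (by omega), add_zero, le_zero_iff] at h1
      exact h1
  refine ⟨fun i hi => ?_, hd1⟩
  rcases lt_or_gt_of_ne hi with h | h
  · exact hlow i h
  · obtain ⟨j, rfl⟩ := Nat.exists_eq_add_of_lt h
    simpa only [add_right_comm] using hhigh j

/-- A local ring is Gorenstein if its quotient by a regular sequence in the maximal ideal is
of finite length with one-dimensional socle. -/
theorem isGorensteinLocalRing_of_isWeaklyRegular {Λ : Type} [CommRing Λ] [IsLocalRing Λ]
    {rs : List Λ} (hrs : IsWeaklyRegular Λ rs) (hmem : ∀ x ∈ rs, x ∈ maximalIdeal Λ)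
    (hfin : IsFiniteLength Λ (Λ ⧸ (Ideal.ofList rs • ⊤ : Submodule Λ Λ)))
    (hsoc : extLength Λ (ResidueField Λ) (Λ ⧸ (Ideal.ofList rs • ⊤ : Submodule Λ Λ)) 0 ≤ 1) :
    IsGorensteinLocalRing Λ := by
  obtain ⟨h0, h1⟩ := exists_extLength_residueField hrs hmem hfin hsoc
  refine ⟨rs.length, fun i hi => ?_, ?_⟩
  · obtain ⟨e⟩ := nonempty_extMod_linearEquiv (Λ := Λ) (ResidueField Λ) Λ i
    have := Module.length_eq_zero_iff.mp (h0 i hi)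
    exact e.injective.subsingleton
  · obtain ⟨e⟩ := nonempty_extMod_linearEquiv (Λ := Λ) (ResidueField Λ) Λ rs.length
    obtain ⟨e'⟩ := nonempty_linearEquiv_residueField h1
    exact ⟨e.trans e'⟩

end GorensteinCriterion

section RegularLocalRing

open RingTheory.Sequence IsLocalRing

universe u

theorem exists_span_singleton_sup_span_range {Λ : Type*} [CommRing Λ] [IsLocalRing Λ] {t : ℕ}
    {f : Fin (t + 1) → Λ} (hf : Ideal.span (Set.range f) = maximalIdeal Λ) {x : Λ}
    (hx : x ∈ maximalIdeal Λ) (hx2 : x ∉ maximalIdeal Λ ^ 2) :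
    ∃ g : Fin t → Λ, Ideal.span {x} ⊔ Ideal.span (Set.range g) = maximalIdeal Λ := by
  have hfm : ∀ i, f i ∈ maximalIdeal Λ := fun i =>
    hf ▸ Ideal.subset_span (Set.mem_range_self i)
  obtain ⟨c, hc⟩ := Ideal.mem_span_range_iff_exists_fun.mp (hf.symm ▸ hx)
  obtain ⟨i, hi⟩ : ∃ i, IsUnit (c i) := by
    by_contra! h
    refine hx2 (hc ▸ sum_mem fun i _ => ?_)
    rw [sq]
    exact Ideal.mul_mem_mul ((mem_maximalIdeal _).mpr (h i)) (hfm i)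
  refine ⟨f ∘ i.succAbove, le_antisymm (sup_le ?_ ?_) ?_⟩
  · rwa [Ideal.span_le, Set.singleton_subset_iff]
  · rw [Ideal.span_le]
    rintro _ ⟨j, rfl⟩
    exact hfm _
  · set J := Ideal.span {x} ⊔ Ideal.span (Set.range (f ∘ i.succAbove)) with hJ
    have hj : ∀ j, f (i.succAbove j) ∈ J := fun j =>
      Ideal.mem_sup_right (Ideal.subset_span ⟨j, rfl⟩)
    have hxJ : x ∈ J := Ideal.mem_sup_left (Ideal.mem_span_singleton_self x)
    rw [← hf, Ideal.span_le]
    rintro _ ⟨k, rfl⟩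
    rcases eq_or_ne k i with rfl | hk
    · rw [Fin.sum_univ_succAbove _ k] at hc
      have : c k * f k ∈ J := by
        rw [eq_sub_of_add_eq hc]
        exact J.sub_mem hxJ (sum_mem fun j _ => J.mul_mem_left _ (hj j))
      exact (J.unit_mul_mem_iff_mem hi).mp this
    · obtain ⟨j, rfl⟩ := Fin.exists_succAbove_eq hk
      exact hj j

theorem exists_mem_maximalIdeal_notMem {Λ : Type*} [CommRing Λ] [IsLocalRing Λ]
    [IsNoetherianRing Λ] (h : 0 < ringKrullDim Λ) :
    ∃ x ∈ maximalIdeal Λ, x ∉ maximalIdeal Λ ^ 2 ∧ ∀ p ∈ minimalPrimes Λ, x ∉ p := by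
  have hmin : ∀ p ∈ minimalPrimes Λ, ¬ maximalIdeal Λ ≤ p := fun p hp hle => by
    rw [← maximalIdeal_height_eq_ringKrullDim] at h
    have hp' : p = maximalIdeal Λ := le_antisymm (le_maximalIdeal hp.1.1.ne_top) hle
    rw [hp', ← Ideal.height_eq_zero_iff] at hp
    rw [hp] at h
    exact h.ne rfl
  have hsq : ¬ maximalIdeal Λ ≤ maximalIdeal Λ ^ 2 := fun hle => by
    have hbot : maximalIdeal Λ = ⊥ :=
      Submodule.eq_bot_of_le_smul_of_le_jacobson_bot _ _ (IsNoetherian.noetherian _)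
        (by rwa [smul_eq_mul, ← sq]) (maximalIdeal_le_jacobson _)
    obtain ⟨p, hp, -⟩ := Ideal.exists_minimalPrimes_le (I := ⊥) (J := maximalIdeal Λ) bot_le
    exact hmin p hp (hbot ▸ bot_le)
  have hfin := minimalPrimes.finite_of_isNoetherianRing Λ
  have := mt (Ideal.subset_union_prime_finite (s := insert (maximalIdeal Λ ^ 2) (minimalPrimes Λ))
    (f := id) (hfin.insert _) (maximalIdeal Λ ^ 2) (maximalIdeal Λ ^ 2)
    (fun p hp h1 _ => (Set.mem_of_mem_insert_of_ne hp h1).1.1) (I := maximalIdeal Λ)).mp (by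
      rintro ⟨p, hp | hp, hle⟩
      · exact hsq (hp ▸ hle)
      · exact hmin p hp hle)
  obtain ⟨x, hx, hx'⟩ := Set.not_subset.mp this
  simp only [Set.mem_iUnion, not_exists] at hx'
  exact ⟨x, hx, hx' _ (Set.mem_insert _ _), fun p hp => hx' p (Set.mem_insert_of_mem _ hp)⟩

theorem isDomain_of_isPrime_span_singleton {Λ : Type*} [CommRing Λ] [IsLocalRing Λ]
    [IsNoetherianRing Λ] {x : Λ} (hx : (Ideal.span {x}).IsPrime)
    (hmin : ∀ p ∈ minimalPrimes Λ, x ∉ p) : IsDomain Λ := by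
  obtain ⟨p, hp, hle⟩ := Ideal.exists_minimalPrimes_le (I := ⊥) (J := Ideal.span {x}) bot_le
  have hpp : p.IsPrime := hp.1.1
  have hbot : p = ⊥ := by
    refine Submodule.eq_bot_of_le_smul_of_le_jacobson_bot (Ideal.span {x}) p
      (IsNoetherian.noetherian _) (fun y hy => ?_)
      ((le_maximalIdeal hx.ne_top).trans (maximalIdeal_le_jacobson _))
    obtain ⟨z, rfl⟩ := Ideal.mem_span_singleton'.mp (hle hy)
    rw [smul_eq_mul, mul_comm z]
    exact Ideal.mul_mem_mul (Ideal.mem_span_singleton_self x)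
      ((hpp.mem_or_mem hy).resolve_right (hmin p hp))
  subst hbot
  exact IsDomain.of_bot_isPrime Λ

theorem isDomain_and_exists_isWeaklyRegular (t : ℕ) : ∀ (Λ : Type u) [CommRing Λ]
    [IsLocalRing Λ] [IsNoetherianRing Λ], ringKrullDim Λ = t →
    (∃ f : Fin t → Λ, Ideal.span (Set.range f) = maximalIdeal Λ) →
    IsDomain Λ ∧ ∃ rs : List Λ, rs.length = t ∧ Ideal.ofList rs = maximalIdeal Λ ∧
      IsWeaklyRegular Λ rs := by
  induction t with
  | zero =>
    rintro Λ _ _ _ - ⟨f, hf⟩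
    rw [Set.range_eq_empty, Ideal.span_empty] at hf
    have hF : IsField Λ := isField_iff_maximalIdeal_eq.mpr hf.symm
    exact ⟨hF.isDomain, [], rfl, by rw [Ideal.ofList_nil, hf], IsWeaklyRegular.nil _ _⟩
  | succ t ih =>
    rintro Λ _ _ _ hdim ⟨f, hf⟩
    obtain ⟨x, hxm, hx2, hxp⟩ := exists_mem_maximalIdeal_notMem (Λ := Λ) (by
      rw [hdim]; exact_mod_cast t.succ_pos)
    obtain ⟨g, hg⟩ := exists_span_singleton_sup_span_range hf hxm hx2
    have hne : Ideal.span {x} ≠ ⊤ := fun h =>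
      (maximalIdeal.isMaximal Λ).ne_top (top_le_iff.mp (hg ▸ h ▸ le_sup_left))
    let Q := Λ ⧸ Ideal.span {x}
    let π : Λ →+* Q := Ideal.Quotient.mk _
    have hπ : Function.Surjective π := Ideal.Quotient.mk_surjective
    have : Nontrivial Q := Ideal.Quotient.nontrivial_iff.mpr hne
    have : IsLocalRing Q := .of_surjective' π hπ
    have hmax : (maximalIdeal Λ).map π = maximalIdeal Q :=
      map_maximalIdeal_of_surjective π hπ
    have hg' : Ideal.span (Set.range (π ∘ g)) = maximalIdeal Q := by
      rw [← hmax, ← hg, Ideal.map_sup, Ideal.map_span, Ideal.map_span, Set.image_singleton,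
        Ideal.Quotient.eq_zero_iff_mem.mpr (Ideal.mem_span_singleton_self x),
        Ideal.span_singleton_zero, bot_sup_eq, Set.range_comp]
    have hdimQ : ringKrullDim Q = t := by
      refine le_antisymm ?_ ?_
      · refine (ringKrullDim_le_spanFinrank_maximalIdeal Q).trans ?_
        rw [← hg']
        have h1 := Submodule.spanFinrank_span_le_ncard_of_finite (R := Q)
          (Set.finite_range (π ∘ g))
        have h2 : (Set.range (π ∘ g)).ncard ≤ t := by
          rw [← Set.image_univ]
          refine (Set.ncard_image_le).trans ?_
          simp [Set.ncard_univ]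
        exact_mod_cast h1.trans h2
      · have := ringKrullDim_le_ringKrullDim_quotient_add_encard (R := Λ) {x}
          (by rw [ringJacobson_eq_maximalIdeal]; simpa using hxm)
        rw [hdim, Set.encard_singleton] at this
        exact ENat.WithBot.add_le_add_one_right_iff.mp (by exact_mod_cast this)
    obtain ⟨hdom, rs, hlen, hrs, hreg⟩ := ih Q hdimQ ⟨_, hg'⟩
    have hprime : (Ideal.span {x}).IsPrime := (Ideal.Quotient.isDomain_iff_prime _).mp hdom
    have hdomΛ := isDomain_of_isPrime_span_singleton hprime hxp
    obtain ⟨ss, rfl⟩ : ∃ ss : List Λ, ss.map π = rs :=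
      ⟨rs.map (Function.surjInv hπ), by simp⟩
    refine ⟨hdomΛ, x :: ss, by simpa using hlen, ?_, ?_⟩
    · rw [← Ideal.map_ofList, ← hmax] at hrs
      have := congrArg (Ideal.comap π) hrs
      rw [Ideal.comap_map_of_surjective' π hπ, Ideal.comap_map_of_surjective' π hπ,
        Ideal.mk_ker] at this
      rw [Ideal.ofList_cons, sup_comm, this, sup_eq_left, ← hg]
      exact le_sup_left
    · refine .cons ?_ ?_
      · refine .of_ne_zero fun h0 => hx2 (h0 ▸ zero_mem _)
      · have h1 := (isWeaklyRegular_map_algebraMap_iff (R := Λ) (M := Q) Q ss).mp hreg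
        refine (LinearEquiv.isWeaklyRegular_congr ?_ ss).mp h1
        exact Submodule.quotEquivOfEq _ _ (by
          rw [← Submodule.ideal_span_singleton_smul, smul_eq_mul, Ideal.mul_top])

theorem length_residueField_end_le_one (Λ : Type*) [CommRing Λ] [IsLocalRing Λ] :
    Module.length Λ (ResidueField Λ →ₗ[Λ] ResidueField Λ) ≤ 1 := by
  have e : ResidueField Λ ≃ₗ[Λ] (Λ ⧸ maximalIdeal Λ) := LinearEquiv.refl _ _
  have h1 : Module.length Λ (ResidueField Λ) = 1 := by
    rw [Module.length_eq_one_iff]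
    exact isSimpleModule_iff_quot_maximal.mpr ⟨_, maximalIdeal.isMaximal Λ, ⟨e⟩⟩
  let ev : (ResidueField Λ →ₗ[Λ] ResidueField Λ) →ₗ[Λ] ResidueField Λ :=
    LinearMap.applyₗ (1 : ResidueField Λ)
  refine (Module.length_le_of_injective ev fun φ ψ h => LinearMap.ext fun y => ?_).trans h1.le
  obtain ⟨y, rfl⟩ := residue_surjective y
  have hy : residue Λ y = y • (1 : ResidueField Λ) := by
    rw [Algebra.smul_def, mul_one, ResidueField.algebraMap_eq]
  rw [hy, map_smul, map_smul]
  exact congrArg (y • ·) h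

theorem IsRegularLocalRing.extLength_self {Λ : Type u} [CommRing Λ] [IsRegularLocalRing Λ] {t : ℕ}
    (ht : ringKrullDim Λ = t) : (∀ i < t, extLength Λ (ResidueField Λ) Λ i = 0) ∧
      extLength Λ (ResidueField Λ) Λ t ≤ 1 := by
  obtain ⟨f, hf⟩ : ∃ f : Fin t → Λ, Ideal.span (Set.range f) = maximalIdeal Λ := by
    obtain ⟨s, hs, hspan⟩ := Submodule.FG.exists_span_finset_card_eq_spanFinrank
      (IsNoetherian.noetherian (maximalIdeal Λ))
    have hcard : s.card = t := by
      have := IsRegularLocalRing.spanFinrank_maximalIdeal (R := Λ)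
      rw [ht, ← hs] at this
      exact_mod_cast this
    refine ⟨fun i => (s.equivFinOfCardEq hcard).symm i, ?_⟩
    rw [Set.range_comp' Subtype.val, EquivLike.range_eq_univ, Set.image_univ,
      Subtype.range_coe]
    exact hspan
  obtain ⟨-, rs, hlen, hrs, hreg⟩ := isDomain_and_exists_isWeaklyRegular t Λ ht ⟨f, hf⟩
  have hmem : ∀ x ∈ rs, x ∈ maximalIdeal Λ := fun x hx => hrs ▸ Ideal.subset_span hx
  obtain ⟨h0, h1⟩ := hreg.extLength_le_quotient (N := ResidueField Λ) (j := 0)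
    (fun x hx => mem_annihilator_residueField (hmem x hx)) (by simp)
  rw [hlen, zero_add] at h0 h1
  refine ⟨h0, h1.trans ?_⟩
  have e : (Λ ⧸ (Ideal.ofList rs • ⊤ : Submodule Λ Λ)) ≃ₗ[Λ] ResidueField Λ :=
    Submodule.quotEquivOfEq _ (maximalIdeal Λ) (by rw [smul_eq_mul, Ideal.mul_top, hrs])
  rw [extLength_congr_right e, extLength_zero]
  exact length_residueField_end_le_one Λ

end RegularLocalRing

section Descent

open CategoryTheory Abelian RingTheory.Sequence IsLocalRing

theorem isGorensteinLocalRing_of_surjective {Λ Γ : Type} [CommRing Λ] [IsLocalRing Λ]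
    [IsNoetherianRing Λ] [CommRing Γ] [IsLocalRing Γ] [Algebra Λ Γ]
    (hsurj : Function.Surjective (algebraMap Λ Γ)) {d : ℕ}
    (hlow : ∀ i < d, extLength Λ (ResidueField Λ) Γ i = 0)
    (hd : extLength Λ (ResidueField Λ) Γ d ≤ 1) (hdim : ringKrullDim Γ ≤ d) :
    IsGorensteinLocalRing Γ := by
  have hloc : IsLocalHom (algebraMap Λ Γ) := IsLocalHom.of_surjective _ hsurj
  have hnoeth : IsNoetherianRing Γ := isNoetherianRing_of_surjective _ _ _ hsurj
  have hfinΓ : Module.Finite Λ Γ := .of_surjective (Algebra.linearMap Λ Γ) hsurj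
  have hmax : (maximalIdeal Λ).map (algebraMap Λ Γ) = maximalIdeal Γ :=
    map_maximalIdeal_of_surjective _ hsurj
  have hfink : Module.Finite Λ (ResidueField Λ) :=
    .of_surjective (Algebra.linearMap Λ (ResidueField Λ)) residue_surjective
  obtain ⟨zs, hlen, hzm, hzreg⟩ := ModuleCat.exists_isRegular_of_exists_subsingleton_ext
    (maximalIdeal Λ) d (ModuleCat.of Λ Γ)
    (by
      change maximalIdeal Λ • (⊤ : Submodule Λ Γ) < ⊤
      rw [Ideal.smul_top_eq_map, hmax, lt_top_iff_ne_top]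
      exact fun h => (maximalIdeal.isMaximal Γ).ne_top
        (Submodule.restrictScalars_injective Λ Γ Γ h))
    (ModuleCat.of Λ (ResidueField Λ))
    (by
      change Module.support Λ (ResidueField Λ) = _
      rw [Module.support_eq_zeroLocus]
      exact congrArg (fun I : Ideal Λ => PrimeSpectrum.zeroLocus (I : Set Λ))
        (Ideal.annihilator_quotient (I := maximalIdeal Λ)))
    (fun i hi => Module.length_eq_zero_iff.mp (hlow i hi))
  replace hzreg : IsRegular Γ zs := hzreg
  obtain ⟨ws, hws⟩ : ∃ ws, zs.map (algebraMap Λ Γ) = ws := ⟨_, rfl⟩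
  have hwreg : IsWeaklyRegular Γ ws := by
    rw [← hws]
    exact (isWeaklyRegular_map_algebraMap_iff Γ Γ zs).mpr hzreg.toIsWeaklyRegular
  have hwm : ∀ x ∈ ws, x ∈ maximalIdeal Γ := by
    rw [← hws]
    intro x hx
    obtain ⟨z, hz, rfl⟩ := List.mem_map.mp hx
    rw [← hmax]
    exact Ideal.mem_map_of_mem _ (hzm z hz)
  have hwlen : ws.length = d := by rw [← hws, List.length_map, hlen]
  have hsub : (Ideal.ofList ws • ⊤ : Submodule Γ Γ).restrictScalars Λ =
      (Ideal.ofList zs • ⊤ : Submodule Λ Γ) := by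
    rw [← hws, ← Ideal.map_ofList, Ideal.smul_restrictScalars, Submodule.restrictScalars_top]
  refine isGorensteinLocalRing_of_isWeaklyRegular hwreg hwm ?_ ?_
  · have hdimq : ringKrullDim (Γ ⧸ Ideal.ofList ws) ≤ 0 := by
      have hwreg' : IsRegular Γ ws := ⟨hwreg, fun h => (maximalIdeal.isMaximal Γ).ne_top
        (top_le_iff.mp (by
          rw [smul_eq_mul, Ideal.mul_top] at h
          exact h.le.trans (Ideal.span_le.mpr hwm)))⟩
      have := ringKrullDim_add_length_eq_ringKrullDim_of_isRegular ws hwreg'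
      rw [hwlen] at this
      rw [← this] at hdim
      exact ENat.WithBot.add_le_add_natCast_right_iff.mp (by simpa using hdim)
    have : Ring.KrullDimLE 0 (Γ ⧸ Ideal.ofList ws) := Ring.krullDimLE_iff.mpr hdimq
    have : IsArtinianRing (Γ ⧸ Ideal.ofList ws) :=
      IsNoetherianRing.isArtinianRing_of_krullDimLE_zero
    rw [← Module.length_ne_top_iff, smul_eq_mul, Ideal.mul_top,
      Module.length_eq_of_surjective (S := Γ) (R := Γ ⧸ Ideal.ofList ws)
        Ideal.Quotient.mk_surjective, Module.length_ne_top_iff]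
    exact (isArtinianRing_iff_isFiniteLength _).mp this
  · have h1 := (hzreg.toIsWeaklyRegular.extLength_quotient_le (N := ResidueField Λ) (j := 0)
      (by rwa [zero_add, hlen])).2
    let e : (Γ ⧸ (Ideal.ofList zs • ⊤ : Submodule Λ Γ)) ≃ₗ[Λ]
        (Γ ⧸ (Ideal.ofList ws • ⊤ : Submodule Γ Γ)) :=
      (Submodule.quotEquivOfEq _ _ hsub.symm).trans (Submodule.Quotient.restrictScalarsEquiv Λ _)
    rw [zero_add, hlen, extLength_congr_right e, extLength_zero] at h1
    rw [extLength_zero, ← Module.length_eq_of_surjective (S := Λ) hsurj]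
    refine le_trans ?_ (h1.trans hd)
    let κ : ResidueField Λ →ₗ[Λ] ResidueField Γ :=
      { ResidueField.map (algebraMap Λ Γ) with
        map_smul' := fun a x => by
          obtain ⟨x, rfl⟩ := residue_surjective x
          change residue Γ (algebraMap Λ Γ (a * x)) = a • residue Γ (algebraMap Λ Γ x)
          rw [map_mul, map_mul, ← algebraMap_smul Γ a, Algebra.smul_def]
          rfl }
    have hκ : Function.Surjective κ := fun y => by
      obtain ⟨y, rfl⟩ := residue_surjective y
      obtain ⟨x, rfl⟩ := hsurj y
      exact ⟨residue Λ x, rfl⟩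
    refine Module.length_le_of_injective ((LinearMap.lcomp Λ _ κ).comp
      (LinearMap.restrictScalarsₗ Λ Γ (ResidueField Γ)
        (Γ ⧸ (Ideal.ofList ws • ⊤ : Submodule Γ Γ)) Λ)) fun φ ψ h => LinearMap.ext fun y => ?_
    obtain ⟨x, rfl⟩ := hκ y
    exact LinearMap.congr_fun h x

end Descent

section DepthChain

open RingTheory.Sequence IsLocalRing

universe u

section ColonSequence

variable {Λ : Type u} [CommRing Λ] {I I' K : Ideal Λ} {y : Λ}

/-- The exact sequence `0 → Λ/(I : y) → Λ/I → Λ/(I + (y)) → 0`. -/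
theorem exists_exact_of_mul_mem_iff (hy : ∀ f, y * f ∈ I ↔ f ∈ I') (hK : I ⊔ Ideal.span {y} = K) :
    ∃ (f : (Λ ⧸ I') →ₗ[Λ] (Λ ⧸ I)) (g : (Λ ⧸ I) →ₗ[Λ] (Λ ⧸ K)), Function.Injective f ∧
      Function.Surjective g ∧ Function.Exact f g := by
  subst hK
  refine ⟨Submodule.mapQ I' I (LinearMap.mulLeft Λ y) fun x hx => (hy x).mpr hx,
    Submodule.factor le_sup_left, ?_, Submodule.factor_surjective _, ?_⟩
  · rw [injective_iff_map_eq_zero]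
    intro x hx
    obtain ⟨x, rfl⟩ := I'.mkQ_surjective x
    exact (Submodule.Quotient.mk_eq_zero I').mpr
      ((hy x).mp ((Submodule.Quotient.mk_eq_zero I).mp hx))
  · intro x
    obtain ⟨x, rfl⟩ := I.mkQ_surjective x
    constructor
    · intro hx
      obtain ⟨a, ha, b, hb, rfl⟩ := Submodule.mem_sup.mp
        ((Submodule.Quotient.mk_eq_zero (I ⊔ Ideal.span {y})).mp hx)
      obtain ⟨c, rfl⟩ := Ideal.mem_span_singleton'.mp hb
      refine ⟨I'.mkQ c, (Submodule.Quotient.eq I).mpr ?_⟩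
      have : y * c - (a + c * y) = -a := by ring
      exact this ▸ I.neg_mem ha
    · rintro ⟨c, hc⟩
      obtain ⟨c, rfl⟩ := I'.mkQ_surjective c
      rw [← hc]
      exact (Submodule.Quotient.mk_eq_zero (I ⊔ Ideal.span {y})).mpr
        (Ideal.mem_sup_right (Ideal.mul_mem_right _ _ (Ideal.mem_span_singleton_self y)))

end ColonSequence

variable {A : Type*} [CommRing A] {Λ : Type u} [CommRing Λ] [Algebra A Λ]

theorem mul_mem_map_iff (M : Submonoid A) [IsLocalization M Λ] {I I' : Ideal A} {y : A}
    (hy : ∀ f, y * f ∈ I ↔ f ∈ I') (f : Λ) :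
    algebraMap A Λ y * f ∈ I.map (algebraMap A Λ) ↔ f ∈ I'.map (algebraMap A Λ) := by
  obtain ⟨a, s, rfl⟩ := IsLocalization.exists_mk'_eq M f
  rw [IsLocalization.mul_mk'_eq_mk'_of_mul, IsLocalization.mk'_mem_map_algebraMap_iff,
    IsLocalization.mk'_mem_map_algebraMap_iff]
  simp_rw [← hy, mul_left_comm y]

theorem exists_exact_map (M : Submonoid A) [IsLocalization M Λ] {I I' K : Ideal A} {y : A}
    (hy : ∀ f, y * f ∈ I ↔ f ∈ I') (hK : I ⊔ Ideal.span {y} = K) :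
    ∃ (f : (Λ ⧸ I'.map (algebraMap A Λ)) →ₗ[Λ] (Λ ⧸ I.map (algebraMap A Λ)))
      (g : (Λ ⧸ I.map (algebraMap A Λ)) →ₗ[Λ] (Λ ⧸ K.map (algebraMap A Λ))),
      Function.Injective f ∧ Function.Surjective g ∧ Function.Exact f g :=
  exists_exact_of_mul_mem_iff (mul_mem_map_iff M hy)
    (by rw [← hK, Ideal.map_sup, Ideal.map_span, Set.image_singleton])

variable [IsLocalRing Λ]

variable (Λ) in
/-- `Ext^i(k, Λ/IΛ)` vanishes for `i + c < t`. -/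
def ExtVanishes (t c : ℕ) (I : Ideal A) : Prop :=
  ∀ i, i + c < t → extLength Λ (ResidueField Λ) (Λ ⧸ I.map (algebraMap A Λ)) i = 0

variable {t c c' : ℕ} {I I' K : Ideal A} {y : A}

theorem ExtVanishes.mono (h : ExtVanishes Λ t c I) (hc : c ≤ c') : ExtVanishes Λ t c' I :=
  fun i hi => h i (by omega)

theorem extVanishes_top : ExtVanishes Λ t c (⊤ : Ideal A) := fun i _ => by
  have : Subsingleton (Λ ⧸ (⊤ : Ideal A).map (algebraMap A Λ)) := by
    rw [Ideal.map_top]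
    infer_instance
  exact extLength_of_subsingleton_right _ _ i

section Localization

variable (M : Submonoid A) [IsLocalization M Λ] (hy : ∀ f, y * f ∈ I ↔ f ∈ I')
  (hK : I ⊔ Ideal.span {y} = K)
include M hy hK

theorem ExtVanishes.extLength_colon_le (hZ : ExtVanishes Λ t c K) {i : ℕ}
    (hi : i + c ≤ t) :
    extLength Λ (ResidueField Λ) (Λ ⧸ I'.map (algebraMap A Λ)) i ≤
      extLength Λ (ResidueField Λ) (Λ ⧸ I.map (algebraMap A Λ)) i := by
  obtain ⟨f, g, hf, hg, hfg⟩ := exists_exact_map (Λ := Λ) M hy hK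
  cases i with
  | zero => exact extLength_zero_le_of_injective f hf _
  | succ i =>
    refine (extLength_left_le f g hf hg hfg _ i).trans ?_
    rw [hZ i (by omega), zero_add]

theorem ExtVanishes.colon (hY : ExtVanishes Λ t c I) (hZ : ExtVanishes Λ t (c + 1) K) :
    ExtVanishes Λ t c I' := fun i hi =>
  le_zero_iff.mp ((hZ.extLength_colon_le M hy hK (by omega)).trans (hY i hi).le)

theorem ExtVanishes.of_colon (hX : ExtVanishes Λ t c I') (hZ : ExtVanishes Λ t c K) :
    ExtVanishes Λ t c I := fun i hi => by
  obtain ⟨f, g, hf, hg, hfg⟩ := exists_exact_map (Λ := Λ) M hy hK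
  have := extLength_mid_le f g hf hg hfg (ResidueField Λ) i
  rwa [hX i hi, hZ i hi, add_zero, le_zero_iff] at this

end Localization

theorem IsRegularlyGenerated.extLength_quotient_le (M : Submonoid A) [IsLocalization M Λ]
    {r d : ℕ} (hI : IsRegularlyGenerated I r)
    (hΛ : ∀ i < d + r, extLength Λ (ResidueField Λ) Λ i = 0) :
    (∀ i < d, extLength Λ (ResidueField Λ) (Λ ⧸ I.map (algebraMap A Λ)) i = 0) ∧
      extLength Λ (ResidueField Λ) (Λ ⧸ I.map (algebraMap A Λ)) d ≤
        extLength Λ (ResidueField Λ) Λ (d + r) := by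
  obtain ⟨rs, rfl, rfl, hrs⟩ := hI
  have hrs' := hrs.of_isLocalization Λ M
  obtain ⟨h0, h1⟩ := hrs'.extLength_quotient_le (N := ResidueField Λ) (j := d)
    (by simpa using hΛ)
  have e : (Λ ⧸ (Ideal.ofList (rs.map (algebraMap A Λ)) • ⊤ : Submodule Λ Λ)) ≃ₗ[Λ]
      (Λ ⧸ (Ideal.ofList rs).map (algebraMap A Λ)) :=
    Submodule.quotEquivOfEq _ _ (by rw [smul_eq_mul, Ideal.mul_top, Ideal.map_ofList])
  simp_rw [extLength_congr_right e] at h0 h1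
  exact ⟨h0, by simpa using h1⟩

theorem IsRegularlyGenerated.extVanishes (M : Submonoid A) [IsLocalization M Λ] {r : ℕ}
    (hI : IsRegularlyGenerated I r) (hΛ : ∀ i < t, extLength Λ (ResidueField Λ) Λ i = 0) :
    ExtVanishes Λ t r I := fun i hi =>
  (hI.extLength_quotient_le (Λ := Λ) M (d := t - r) fun j hj => hΛ j (by omega)).1 i (by omega)

section Generic

variable {n : ℕ} [Algebra (HURing n) Λ] (M : Submonoid (HURing n)) [IsLocalization M Λ]
  (hΛ : ∀ i < t, extLength Λ (ResidueField Λ) Λ i = 0)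
include M hΛ

theorem extVanishes_blockIdeal_and_rowIdeal {p : ℕ} (hp : p ≤ 2 * n) :
    ExtVanishes Λ t (2 * n - 1) (blockIdeal n p) ∧ ExtVanishes Λ t (2 * n) (rowIdeal n p p) := by
  have hcoord : ExtVanishes Λ t (2 * n) (coordIdeal n 0) := by
    have := (isRegularlyGenerated_coordIdeal (n := n) (2 * n) le_rfl).extVanishes (Λ := Λ) M hΛ
    rwa [Nat.sub_self] at this
  induction p with
  | zero =>
    rw [blockIdeal_zero, rowIdeal_zero]
    exact ⟨extVanishes_top, hcoord⟩
  | succ p ih =>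
    obtain ⟨-, hrow⟩ := ih (by omega)
    have hS : ExtVanishes Λ t (2 * n - 1) (rowIdeal n (p + 1) p) := by
      have := (isRegularlyGenerated_rowIdeal (n := n) (p := p) (q := p) (by omega)
        le_rfl).extVanishes (Λ := Λ) M hΛ
      exact this.mono (by omega)
    have hblock : ExtVanishes Λ t (2 * n - 1) (blockIdeal n (p + 1)) :=
      hS.colon M (revV_mul_mem_iff (by omega)) (rowIdeal_coord_succ p p)
        (hrow.mono (by omega))
    refine ⟨hblock, ?_⟩
    rcases Nat.even_or_odd (p + 1) with he | ho
    · exact hcoord.of_colon M (mul_blockPf_mem_iff he hp) rfl (hblock.mono (by omega))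
    · rw [← blockIdeal_odd ho]
      exact hblock.mono (by omega)

theorem extLength_huIdeal_le (hn : 0 < n) {d : ℕ} (hd : d + (2 * n - 1) = t) :
    (∀ i < d, extLength Λ (ResidueField Λ) (Λ ⧸ (huIdeal n).map (algebraMap (HURing n) Λ)) i = 0) ∧
      extLength Λ (ResidueField Λ) (Λ ⧸ (huIdeal n).map (algebraMap (HURing n) Λ)) d ≤
        extLength Λ (ResidueField Λ) Λ t := by
  obtain ⟨p, hp⟩ : ∃ p, p + 1 = 2 * n := ⟨2 * n - 1, by omega⟩
  have hodd : Odd p := by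
    rw [← Nat.not_even_iff_odd, ← Nat.even_add_one, hp]
    exact even_two_mul n
  constructor
  · intro i hi
    have := (extVanishes_blockIdeal_and_rowIdeal (Λ := Λ) M hΛ (p := 2 * n) le_rfl).1
    rw [blockIdeal_top] at this
    exact this i (by omega)
  · have hZ := (extVanishes_blockIdeal_and_rowIdeal (Λ := Λ) M hΛ (p := p) (by omega)).1
    rw [blockIdeal_odd hodd] at hZ
    have h1 := hZ.extLength_colon_le M (revV_mul_mem_iff (by omega)) (rowIdeal_coord_succ p p)
      hd.le
    rw [hp, blockIdeal_top] at h1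
    have hreg := isRegularlyGenerated_rowIdeal (n := n) (p := p) (q := p) (by omega) le_rfl
    rw [hp, show 2 * n - 2 * n + p = 2 * n - 1 by omega] at hreg
    refine h1.trans ?_
    have := (hreg.extLength_quotient_le (Λ := Λ) M (d := d) (by rwa [hd])).2
    rwa [hd] at this

end Generic

end DepthChain

section LocalizedQuotient

variable {A : Type*} [CommRing A] (J : Ideal A) (P : Ideal (A ⧸ J)) [P.IsPrime]

/-- The map from the localization of a ring to the localization of its quotient. -/
noncomputable def quotientLocalRingHom :
    Localization.AtPrime (P.comap (Ideal.Quotient.mk J)) →+* Localization.AtPrime P :=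
  Localization.localRingHom _ P (Ideal.Quotient.mk J) rfl

theorem quotientLocalRingHom_surjective : Function.Surjective (quotientLocalRingHom J P) := by
  intro y
  obtain ⟨b, ⟨s, hs⟩, rfl⟩ := IsLocalization.exists_mk'_eq P.primeCompl y
  obtain ⟨b, rfl⟩ := Ideal.Quotient.mk_surjective b
  obtain ⟨s, rfl⟩ := Ideal.Quotient.mk_surjective s
  exact ⟨IsLocalization.mk' _ b ⟨s, hs⟩, Localization.localRingHom_mk' _ _ _ _ _ _⟩

theorem ker_quotientLocalRingHom :
    RingHom.ker (quotientLocalRingHom J P) = J.map (algebraMap A _) := by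
  ext x
  obtain ⟨a, ⟨s, hs⟩, rfl⟩ :=
    IsLocalization.exists_mk'_eq (P.comap (Ideal.Quotient.mk J)).primeCompl x
  rw [RingHom.mem_ker, quotientLocalRingHom, Localization.localRingHom_mk',
    IsLocalization.mk'_eq_zero_iff, IsLocalization.mk'_mem_map_algebraMap_iff]
  constructor
  · rintro ⟨⟨c, hc⟩, h⟩
    obtain ⟨c, rfl⟩ := Ideal.Quotient.mk_surjective c
    exact ⟨c, hc, Ideal.Quotient.eq_zero_iff_mem.mp (by rwa [map_mul])⟩
  · rintro ⟨c, hc, h⟩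
    exact ⟨⟨Ideal.Quotient.mk J c, hc⟩, by rw [← map_mul, Ideal.Quotient.eq_zero_iff_mem.mpr h]⟩

end LocalizedQuotient

open RingTheory.Sequence IsLocalRing in
theorem isGorensteinLocalRing_of_ker_eq {n : ℕ} (hn : 0 < n) {Λ Γ : Type} [CommRing Λ]
    [IsRegularLocalRing Λ] [Algebra (HURing n) Λ] (Q : Ideal (HURing n)) [Q.IsPrime]
    [IsLocalization.AtPrime Λ Q] (hJQ : huIdeal n ≤ Q) [CommRing Γ] [IsLocalRing Γ] [Algebra Λ Γ]
    (hsurj : Function.Surjective (algebraMap Λ Γ))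
    (hker : RingHom.ker (algebraMap Λ Γ) = (huIdeal n).map (algebraMap (HURing n) Λ)) :
    IsGorensteinLocalRing Γ := by
  let e : (Λ ⧸ (huIdeal n).map (algebraMap (HURing n) Λ)) ≃ₗ[Λ] Γ :=
    (Submodule.quotEquivOfEq _ _ hker.symm).trans
      ((Algebra.linearMap Λ Γ).quotKerEquivOfSurjective hsurj)
  obtain ⟨p, hp⟩ : ∃ p, p + 1 = 2 * n := ⟨2 * n - 1, by omega⟩
  have hreg := isRegularlyGenerated_rowIdeal (n := n) (p := p) (q := p) (by omega) le_rfl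
  rw [hp, show 2 * n - 2 * n + p = 2 * n - 1 by omega] at hreg
  have hle : rowIdeal n (2 * n) p ≤ huIdeal n := by
    rw [← blockIdeal_top]
    exact (rowIdeal_mono le_rfl (by omega)).trans (rowIdeal_le_blockIdeal _)
  obtain ⟨rs, hlen, hrs, hw⟩ := hreg
  have hdimS := ringKrullDim_add_length_eq_ringKrullDim_of_isRegular _
    (hw.isRegular_of_isLocalization_of_mem Λ Q fun x hx =>
      hJQ (hle (hrs ▸ Ideal.subset_span hx)))
  rw [List.length_map, hlen] at hdimS
  have hlift : ∀ x ∈ Ideal.ofList (rs.map (algebraMap (HURing n) Λ)), algebraMap Λ Γ x = 0 :=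
    fun x hx => by
      rw [← Ideal.map_ofList, hrs] at hx
      exact hker.ge (Ideal.map_mono hle hx)
  have hφ := Ideal.Quotient.lift_surjective_of_surjective _ hlift hsurj
  obtain ⟨d, hd⟩ : ∃ d : ℕ,
      ringKrullDim (Λ ⧸ Ideal.ofList (rs.map (algebraMap (HURing n) Λ))) = d := by
    have := (Ideal.Quotient.lift _ _ hlift).domain_nontrivial
    have : FiniteRingKrullDim (Λ ⧸ Ideal.ofList (rs.map (algebraMap (HURing n) Λ))) := by
      have := IsLocalRing.of_surjective' (Ideal.Quotient.mk
        (Ideal.ofList (rs.map (algebraMap (HURing n) Λ)))) Ideal.Quotient.mk_surjective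
      infer_instance
    obtain ⟨a, ha⟩ := WithBot.ne_bot_iff_exists.mp (ringKrullDim_ne_bot
      (R := Λ ⧸ Ideal.ofList (rs.map (algebraMap (HURing n) Λ))))
    have ht := ringKrullDim_ne_top (R := Λ ⧸ Ideal.ofList (rs.map (algebraMap (HURing n) Λ)))
    obtain ⟨d, rfl⟩ := ENat.ne_top_iff_exists.mp (fun h : a = ⊤ => ht (by rw [← ha, h]; rfl))
    exact ⟨d, ha.symm⟩
  rw [hd] at hdimS
  have hdimR : ringKrullDim Γ ≤ d := hd ▸ ringKrullDim_le_of_surjective _ hφ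
  obtain ⟨h0, h1⟩ := IsRegularLocalRing.extLength_self (Λ := Λ) (t := d + (2 * n - 1))
    (by rw [← hdimS]; push_cast; rfl)
  obtain ⟨g0, g1⟩ := extLength_huIdeal_le (Λ := Λ) Q.primeCompl h0 hn rfl
  simp_rw [extLength_congr_right e] at g0 g1
  exact isGorensteinLocalRing_of_surjective hsurj g0 (g1.trans h1) hdimR

theorem isGorensteinLocalRing_localization {n : ℕ} (hn : 0 < n)
    (P : Ideal (HURing n ⧸ huIdeal n)) [P.IsPrime] :
    IsGorensteinLocalRing (Localization.AtPrime P) := by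
  let := (quotientLocalRingHom (huIdeal n) P).toAlgebra
  refine isGorensteinLocalRing_of_ker_eq hn (P.comap (Ideal.Quotient.mk (huIdeal n)))
    (fun x hx => ?_) (quotientLocalRingHom_surjective (huIdeal n) P)
    (ker_quotientLocalRingHom (huIdeal n) P)
  rw [Ideal.mem_comap, Ideal.Quotient.eq_zero_iff_mem.mpr hx]
  exact zero_mem P

/-- The Huneke–Ulrich ideal `J`, generated by the Pfaffian of the generic alternating
`2n × 2n` matrix `Φ` together with the `2n` entries of `Φv` for a generic vector `v`,
has grade `2n-1`, is minimally generated by `2n+1` elements, and `A/J` is Gorenstein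
(all its localizations at primes are Gorenstein local rings); in particular `J` has
deviation 2. -/
theorem huneke_ulrich_ideal_properties (n : ℕ) (hn : 2 ≤ n) :
    gradeIs (HURing n) (huIdeal n) (2*n-1) ∧
    (∀ s : Finset (HURing n), Ideal.span (s : Set (HURing n)) = huIdeal n →
      2*n+1 ≤ s.card) ∧
    ∀ (P : Ideal (HURing n ⧸ huIdeal n)) (_ : P.IsPrime),
      IsGorensteinLocalRing (Localization.AtPrime P) := by
  exact ⟨gradeIs_huIdeal (by omega), fun s hs => two_mul_add_one_le_card hn s hs,
    fun P _ => isGorensteinLocalRing_localization (by omega) P⟩
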